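/- arXiv:2401.04888 — 2 statements merged into one kernel-verified Lean document; each statement's English description precedes it below -/
import Mathlib

section
/- For each α ∈ [0,2) there exists a constant C₀ > 0 with the following property: for any λ > 0 and any smooth solution u : [0,T] × ℝ² → ℝ² of the 2D Kuramoto–Sivashinsky equation ∂ₜu + (u·∇)u = −Δ²u − λΔu that is 2π-periodic in each spatial coordinate and satisfies ∫_Ω u(t,x) dx = 0 for all t ∈ [0,T], one has for all t ∈ [0,T], ‖u(t)‖²_{L²(Ω)} ≤ exp( λ² t + C₀ ∫₀ᵗ ‖u(s)‖_{Ḣ^{−α}}^{4/(2−α)} ds ) · ‖u(0)‖²_{L²(Ω)}. -/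
/-!
Write `Y = ‖u‖²`, `D = ‖Δu‖²` (norms in `L²(Ω)`), `H = ‖u‖²_{Ḣ^{-α}}`. Testing the equation with `u`
and using `-2λ u·Δu ≤ λ²|u|² + |Δu|²` gives (`energy_deriv`)
`Y' ≤ λ² Y - D + 2 |∫ u·(u·∇)u|`,
so it suffices to bound the cubic term by `D + C₀ H^{2/(2-α)} Y` (`nonlinear_absorb`).

The trilinear bound `|∫ u·(u·∇)u| ≤ ‖u‖₄² ‖∇u‖ ≤ 3 Y √D` (`trilinear_bound`) comes from
Ladyzhenskaya's inequality for `|u|²`, the interpolation `‖∇u‖² ≤ √Y √D`, and `Y ≤ D`, which holds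
for mean-free fields by Parseval's identity (`poincare`). If `6 Y ≤ √D`, the cubic term is at most
`D`. Otherwise `D ≤ 36 Y²`, and splitting the Fourier series at `|ℓ|² = K` (`interpolation`),
`Y ≤ K^α H + K⁻² D`, with `K² = 72 Y` makes the second term at most `Y / 2`; solving for `Y` yields
`Y ≤ c H^{2/(2-α)}`, and the cubic term is at most `36 Y²`.

Grönwall's inequality (`gronwall_le`) is then applied with the coefficient
`λ² + C₀ ‖u(s)‖_{Ḣ^{-α}}^{4/(2-α)}`. Its continuity in `s` (`continuous_hnormSq`) makes the time
integral meaningful and follows from the decay `|û_ℓ|² ≤ (2π)⁻² |ℓ|⁻⁴ ‖Δu‖²`, which is locally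
uniform in time.
-/

open Real MeasureTheory Set intervalIntegral
open scoped Real Classical

noncomputable section

/-- Partial derivative in the first spatial coordinate. -/
def pd1 (f : ℝ × ℝ → ℝ) (x : ℝ × ℝ) : ℝ := deriv (fun s => f (s, x.2)) x.1

/-- Partial derivative in the second spatial coordinate. -/
def pd2 (f : ℝ × ℝ → ℝ) (x : ℝ × ℝ) : ℝ := deriv (fun s => f (x.1, s)) x.2

/-- Advective derivative `(v·∇)f = v¹ ∂₁f + v² ∂₂f`. -/
def adv (v : ℝ × ℝ → ℝ × ℝ) (f : ℝ × ℝ → ℝ) (x : ℝ × ℝ) : ℝ :=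
  (v x).1 * pd1 f x + (v x).2 * pd2 f x

/-- Divergence `∇·v = ∂₁v¹ + ∂₂v²`. -/
def divg (v : ℝ × ℝ → ℝ × ℝ) (x : ℝ × ℝ) : ℝ :=
  pd1 (fun y => (v y).1) x + pd2 (fun y => (v y).2) x

/-- Scalar curl `∇⊥·v = ∂₁v² − ∂₂v¹`. -/
def curl2 (v : ℝ × ℝ → ℝ × ℝ) (x : ℝ × ℝ) : ℝ :=
  pd1 (fun y => (v y).2) x - pd2 (fun y => (v y).1) x

/-- Laplacian `Δf = ∂₁²f + ∂₂²f`. -/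
def lap (f : ℝ × ℝ → ℝ) : ℝ × ℝ → ℝ := fun x => pd1 (pd1 f) x + pd2 (pd2 f) x

/-- `|∇v|² = Σ_{i,j} (∂ᵢvʲ)²`. -/
def gradNormSq (v : ℝ × ℝ → ℝ × ℝ) (x : ℝ × ℝ) : ℝ :=
  (pd1 (fun y => (v y).1) x)^2 + (pd2 (fun y => (v y).1) x)^2 +
  (pd1 (fun y => (v y).2) x)^2 + (pd2 (fun y => (v y).2) x)^2

/-- The periodic box `Ω = [0,2π]²`. -/
def Omega2 : Set (ℝ × ℝ) := Set.Icc (0:ℝ) (2*π) ×ˢ Set.Icc (0:ℝ) (2*π)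

/-- `2π`-periodicity in each coordinate for a vector field. -/
def Periodic2 (f : ℝ × ℝ → ℝ × ℝ) : Prop :=
  ∀ x : ℝ × ℝ, f (x.1 + 2*π, x.2) = f x ∧ f (x.1, x.2 + 2*π) = f x

/-- Squared `L²(Ω)` norm of a vector field. -/
def l2sq (v : ℝ × ℝ → ℝ × ℝ) : ℝ := ∫ x in Omega2, ((v x).1^2 + (v x).2^2)

/-- Squared `L²(Ω)` norm of `Δv`. -/
def l2sqLap (v : ℝ × ℝ → ℝ × ℝ) : ℝ :=
  ∫ x in Omega2, ((lap (fun y => (v y).1) x)^2 + (lap (fun y => (v y).2) x)^2)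

/-- `ℓ`-th Fourier coefficient of a scalar field. -/
def fc (f : ℝ × ℝ → ℝ) (ℓ : ℤ × ℤ) : ℂ :=
  ((2*π)^2)⁻¹ • ∫ x in Omega2,
    (f x : ℂ) * Complex.exp (-(Complex.I) * ((ℓ.1:ℂ) * (x.1:ℂ) + (ℓ.2:ℂ) * (x.2:ℂ)))

/-- `ℓ`-th Fourier coefficient of a vector field. -/
def fcVec (v : ℝ × ℝ → ℝ × ℝ) (ℓ : ℤ × ℤ) : ℂ × ℂ :=
  (fc (fun y => (v y).1) ℓ, fc (fun y => (v y).2) ℓ)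

/-- `|v̂_ℓ|²`. -/
def coefAbsSq (v : ℝ × ℝ → ℝ × ℝ) (ℓ : ℤ × ℤ) : ℝ :=
  ‖fc (fun y => (v y).1) ℓ‖^2 + ‖fc (fun y => (v y).2) ℓ‖^2

/-- Squared homogeneous Sobolev norm `‖v‖²_{Ḣ^κ} = (2π)² Σ_{ℓ≠0} |ℓ|^{2κ}|v̂_ℓ|²`. -/
def hnormSq (v : ℝ × ℝ → ℝ × ℝ) (κ : ℝ) : ℝ :=
  (2*π)^2 * ∑' ℓ : ℤ × ℤ,
    if ℓ = 0 then 0 else ((ℓ.1:ℝ)^2 + (ℓ.2:ℝ)^2) ^ κ * coefAbsSq v ℓ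

/-- Homogeneous Sobolev norm `‖v‖_{Ḣ^κ}`. -/
def hnorm (v : ℝ × ℝ → ℝ × ℝ) (κ : ℝ) : ℝ := Real.sqrt (hnormSq v κ)

/-- Projection onto Fourier modes with `|ℓ| ≤ N` (scalar fields). -/
def PN (N : ℝ) (f : ℝ × ℝ → ℝ) (x : ℝ × ℝ) : ℝ :=
  ∑' ℓ : ℤ × ℤ,
    if ((ℓ.1:ℝ)^2 + (ℓ.2:ℝ)^2) ≤ N^2 then
      (fc f ℓ * Complex.exp (Complex.I * ((ℓ.1:ℂ) * (x.1:ℂ) + (ℓ.2:ℂ) * (x.2:ℂ)))).re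
    else 0

/-- Projection onto Fourier modes with `|ℓ| ≤ N` (vector fields). -/
def PNvec (N : ℝ) (v : ℝ × ℝ → ℝ × ℝ) (x : ℝ × ℝ) : ℝ × ℝ :=
  (PN N (fun y => (v y).1) x, PN N (fun y => (v y).2) x)

/-- High-mode part `(I − P_N)v`. -/
def highN (N : ℝ) (v : ℝ × ℝ → ℝ × ℝ) (x : ℝ × ℝ) : ℝ × ℝ := v x - PNvec N v x

/-- `(v·∇)w` as a vector field. -/
def advVec (v w : ℝ × ℝ → ℝ × ℝ) (x : ℝ × ℝ) : ℝ × ℝ :=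
  (adv v (fun y => (w y).1) x, adv v (fun y => (w y).2) x)

/-- Laplacian of a vector field. -/
def lapVec (v : ℝ × ℝ → ℝ × ℝ) (x : ℝ × ℝ) : ℝ × ℝ :=
  (lap (fun y => (v y).1) x, lap (fun y => (v y).2) x)

/-- Spatial mean `(2π)⁻² ∫_Ω v`. -/
def meanOf (v : ℝ × ℝ → ℝ × ℝ) : ℝ × ℝ := ((2*π)^2)⁻¹ • ∫ x in Omega2, v x

/-- Joint smoothness in `(t,x)`. -/
def SmoothTS (u : ℝ → ℝ × ℝ → ℝ × ℝ) : Prop :=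
  ∀ n : ℕ, ContDiff ℝ n (fun p : ℝ × (ℝ × ℝ) => u p.1 p.2)

/-- The 2D inviscid Burgers equation `∂ₜu + (u·∇)u = 0` on `[0,T] × ℝ²`. -/
def IsBurgers (T : ℝ) (u : ℝ → ℝ × ℝ → ℝ × ℝ) : Prop :=
  ∀ t ∈ Set.Icc (0:ℝ) T, ∀ x : ℝ × ℝ,
    deriv (fun s => (u s x).1) t + adv (u t) (fun y => (u t y).1) x = 0 ∧
    deriv (fun s => (u s x).2) t + adv (u t) (fun y => (u t y).2) x = 0

/-- The 2D Kuramoto–Sivashinsky equation `∂ₜu + (u·∇)u = −Δ²u − λΔu` on `[0,T] × ℝ²`. -/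
def IsKSE (lam T : ℝ) (u : ℝ → ℝ × ℝ → ℝ × ℝ) : Prop :=
  ∀ t ∈ Set.Icc (0:ℝ) T, ∀ x : ℝ × ℝ,
    deriv (fun s => (u s x).1) t + adv (u t) (fun y => (u t y).1) x
      = -(lap (lap (fun y => (u t y).1)) x) - lam * lap (fun y => (u t y).1) x ∧
    deriv (fun s => (u s x).2) t + adv (u t) (fun y => (u t y).2) x
      = -(lap (lap (fun y => (u t y).2)) x) - lam * lap (fun y => (u t y).2) x

/-! ### Smooth periodic functions -/

/-- A smooth real function on `ℝ²` that is `2π`-periodic in each coordinate. -/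
structure SP (f : ℝ × ℝ → ℝ) : Prop where
  smooth : ContDiff ℝ ((⊤ : ℕ∞) : WithTop ℕ∞) f
  per1 : ∀ x : ℝ × ℝ, f (x.1 + 2 * π, x.2) = f x
  per2 : ∀ x : ℝ × ℝ, f (x.1, x.2 + 2 * π) = f x

theorem SP.continuous {f : ℝ × ℝ → ℝ} (hf : SP f) : Continuous f := hf.smooth.continuous

theorem SP.differentiable {f : ℝ × ℝ → ℝ} (hf : SP f) : Differentiable ℝ f :=
  hf.smooth.differentiable (by simp)

theorem hasDerivAt_pd1 {f : ℝ × ℝ → ℝ} (hf : Differentiable ℝ f) (x : ℝ × ℝ) :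
    HasDerivAt (fun s => f (s, x.2)) (pd1 f x) x.1 := by
  have : Differentiable ℝ (fun s : ℝ => f (s, x.2)) := by fun_prop
  exact (this x.1).hasDerivAt

theorem hasDerivAt_pd2 {f : ℝ × ℝ → ℝ} (hf : Differentiable ℝ f) (x : ℝ × ℝ) :
    HasDerivAt (fun s => f (x.1, s)) (pd2 f x) x.2 := by
  have : Differentiable ℝ (fun s : ℝ => f (x.1, s)) := by fun_prop
  exact (this x.2).hasDerivAt

theorem pd1_eq {f : ℝ × ℝ → ℝ} (hf : Differentiable ℝ f) :
    pd1 f = fun x => fderiv ℝ f x (1, 0) := by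
  funext x
  have h1 : HasDerivAt (fun s : ℝ => (s, x.2)) ((1 : ℝ), (0 : ℝ)) x.1 :=
    (hasDerivAt_id x.1).prodMk (hasDerivAt_const x.1 x.2)
  exact ((hf (x.1, x.2)).hasFDerivAt.comp_hasDerivAt x.1 h1).deriv

theorem pd2_eq {f : ℝ × ℝ → ℝ} (hf : Differentiable ℝ f) :
    pd2 f = fun x => fderiv ℝ f x (0, 1) := by
  funext x
  have h1 : HasDerivAt (fun s : ℝ => (x.1, s)) ((0 : ℝ), (1 : ℝ)) x.2 :=
    (hasDerivAt_const x.2 x.1).prodMk (hasDerivAt_id x.2)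
  exact ((hf (x.1, x.2)).hasFDerivAt.comp_hasDerivAt x.2 h1).deriv

theorem contDiff_pd1 {f : ℝ × ℝ → ℝ} (hf : ContDiff ℝ ((⊤ : ℕ∞) : WithTop ℕ∞) f) :
    ContDiff ℝ ((⊤ : ℕ∞) : WithTop ℕ∞) (pd1 f) := by
  rw [pd1_eq (hf.differentiable (by simp))]
  exact (hf.fderiv_right (by simp)).clm_apply contDiff_const

theorem contDiff_pd2 {f : ℝ × ℝ → ℝ} (hf : ContDiff ℝ ((⊤ : ℕ∞) : WithTop ℕ∞) f) :
    ContDiff ℝ ((⊤ : ℕ∞) : WithTop ℕ∞) (pd2 f) := by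
  rw [pd2_eq (hf.differentiable (by simp))]
  exact (hf.fderiv_right (by simp)).clm_apply contDiff_const

theorem SP.pd1 {f : ℝ × ℝ → ℝ} (hf : SP f) : SP (pd1 f) := by
  refine ⟨contDiff_pd1 hf.smooth, fun x => ?_, fun x => ?_⟩
  · have h : (fun s => f (s, x.2)) = fun s => f (s + 2 * π, x.2) :=
      funext fun s => (hf.per1 (s, x.2)).symm
    simp only [_root_.pd1]
    conv_rhs => rw [h]
    exact (deriv_comp_add_const (fun s => f (s, x.2)) (2 * π) x.1).symm
  · simp only [_root_.pd1]
    congr 1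
    exact funext fun s => hf.per2 (s, x.2)

theorem SP.pd2 {f : ℝ × ℝ → ℝ} (hf : SP f) : SP (pd2 f) := by
  refine ⟨contDiff_pd2 hf.smooth, fun x => ?_, fun x => ?_⟩
  · simp only [_root_.pd2]
    congr 1
    exact funext fun s => hf.per1 (x.1, s)
  · have h : (fun s => f (x.1, s)) = fun s => f (x.1, s + 2 * π) :=
      funext fun s => (hf.per2 (x.1, s)).symm
    simp only [_root_.pd2]
    conv_rhs => rw [h]
    exact (deriv_comp_add_const (fun s => f (x.1, s)) (2 * π) x.2).symm

theorem SP.mul {f g : ℝ × ℝ → ℝ} (hf : SP f) (hg : SP g) : SP (fun x => f x * g x) :=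
  ⟨hf.smooth.mul hg.smooth, fun x => by simp only [hf.per1, hg.per1],
    fun x => by simp only [hf.per2, hg.per2]⟩

theorem SP.add {f g : ℝ × ℝ → ℝ} (hf : SP f) (hg : SP g) : SP (fun x => f x + g x) :=
  ⟨hf.smooth.add hg.smooth, fun x => by simp only [hf.per1, hg.per1],
    fun x => by simp only [hf.per2, hg.per2]⟩

theorem SP.lap {f : ℝ × ℝ → ℝ} (hf : SP f) : SP (lap f) := hf.pd1.pd1.add hf.pd2.pd2

/-! ### Integration over the periodic box -/

theorem isCompact_Omega2 : IsCompact Omega2 := isCompact_Icc.prod isCompact_Icc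

theorem measurableSet_Omega2 : MeasurableSet Omega2 := measurableSet_Icc.prod measurableSet_Icc

theorem integrableOn_Omega2 {E : Type*} [NormedAddCommGroup E] {f : ℝ × ℝ → E}
    (hf : Continuous f) : IntegrableOn f Omega2 :=
  hf.continuousOn.integrableOn_compact isCompact_Omega2

theorem integral_Omega2 {E : Type*} [NormedAddCommGroup E] [NormedSpace ℝ E] {f : ℝ × ℝ → E}
    (hf : Continuous f) :
    ∫ x in Omega2, f x = ∫ a in (0 : ℝ)..(2 * π), ∫ b in (0 : ℝ)..(2 * π), f (a, b) := by
  have h := setIntegral_prod (μ := volume) (ν := volume) f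
    (s := Icc (0 : ℝ) (2 * π)) (t := Icc (0 : ℝ) (2 * π)) (integrableOn_Omega2 hf)
  simp only [intervalIntegral.integral_of_le two_pi_pos.le, ← integral_Icc_eq_integral_Ioc]
  exact h

theorem integral_Omega2' {E : Type*} [NormedAddCommGroup E] [NormedSpace ℝ E] {f : ℝ × ℝ → E}
    (hf : Continuous f) :
    ∫ x in Omega2, f x = ∫ b in (0 : ℝ)..(2 * π), ∫ a in (0 : ℝ)..(2 * π), f (a, b) := by
  have h := setIntegral_prod_swap (μ := volume) (ν := volume) (Icc (0 : ℝ) (2 * π))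
    (Icc (0 : ℝ) (2 * π)) f
  have h2 := integral_Omega2 (f := fun z => f z.swap) (by fun_prop)
  simp only [Prod.swap_prod_mk] at h2
  rw [← h2]
  exact h.symm

theorem integral_pd1 {f : ℝ × ℝ → ℝ} (hf : SP f) : ∫ x in Omega2, pd1 f x = 0 := by
  rw [integral_Omega2' hf.pd1.continuous]
  have : ∀ b : ℝ, ∫ a in (0 : ℝ)..(2 * π), pd1 f (a, b) = 0 := by
    intro b
    have hc := hf.pd1.continuous
    rw [intervalIntegral.integral_eq_sub_of_hasDerivAt
      (f := fun a => f (a, b)) (fun a _ => hasDerivAt_pd1 hf.differentiable (a, b))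
      (Continuous.intervalIntegrable (by fun_prop) _ _)]
    have := hf.per1 (0, b)
    simp only [zero_add] at this
    simp [this]
  simp [this]

theorem integral_pd2 {f : ℝ × ℝ → ℝ} (hf : SP f) : ∫ x in Omega2, pd2 f x = 0 := by
  rw [integral_Omega2 hf.pd2.continuous]
  have : ∀ a : ℝ, ∫ b in (0 : ℝ)..(2 * π), pd2 f (a, b) = 0 := by
    intro a
    have hc := hf.pd2.continuous
    rw [intervalIntegral.integral_eq_sub_of_hasDerivAt
      (f := fun b => f (a, b)) (fun b _ => hasDerivAt_pd2 hf.differentiable (a, b))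
      (Continuous.intervalIntegrable (by fun_prop) _ _)]
    have := hf.per2 (a, 0)
    simp only [zero_add] at this
    simp [this]
  simp [this]

theorem pd1_mul {f g : ℝ × ℝ → ℝ} (hf : SP f) (hg : SP g) (x : ℝ × ℝ) :
    pd1 (fun y => f y * g y) x = pd1 f x * g x + f x * pd1 g x :=
  ((hasDerivAt_pd1 hf.differentiable x).mul (hasDerivAt_pd1 hg.differentiable x)).deriv

theorem pd2_mul {f g : ℝ × ℝ → ℝ} (hf : SP f) (hg : SP g) (x : ℝ × ℝ) :
    pd2 (fun y => f y * g y) x = pd2 f x * g x + f x * pd2 g x :=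
  ((hasDerivAt_pd2 hf.differentiable x).mul (hasDerivAt_pd2 hg.differentiable x)).deriv

theorem integral_mul_pd1 {f g : ℝ × ℝ → ℝ} (hf : SP f) (hg : SP g) :
    ∫ x in Omega2, f x * pd1 g x = -∫ x in Omega2, pd1 f x * g x := by
  have h := integral_pd1 (hf.mul hg)
  simp only [pd1_mul hf hg] at h
  rw [integral_add (integrableOn_Omega2 (hf.pd1.mul hg).continuous)
    (integrableOn_Omega2 (hf.mul hg.pd1).continuous)] at h
  linarith

theorem integral_mul_pd2 {f g : ℝ × ℝ → ℝ} (hf : SP f) (hg : SP g) :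
    ∫ x in Omega2, f x * pd2 g x = -∫ x in Omega2, pd2 f x * g x := by
  have h := integral_pd2 (hf.mul hg)
  simp only [pd2_mul hf hg] at h
  rw [integral_add (integrableOn_Omega2 (hf.pd2.mul hg).continuous)
    (integrableOn_Omega2 (hf.mul hg.pd2).continuous)] at h
  linarith

/-- Green's first identity on the torus. -/
theorem integral_mul_lap {f g : ℝ × ℝ → ℝ} (hf : SP f) (hg : SP g) :
    ∫ x in Omega2, f x * lap g x
      = -∫ x in Omega2, (pd1 f x * pd1 g x + pd2 f x * pd2 g x) := by
  simp only [lap, mul_add]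
  rw [integral_add (integrableOn_Omega2 (hf.mul hg.pd1.pd1).continuous)
    (integrableOn_Omega2 (hf.mul hg.pd2.pd2).continuous),
    integral_add (integrableOn_Omega2 (hf.pd1.mul hg.pd1).continuous)
    (integrableOn_Omega2 (hf.pd2.mul hg.pd2).continuous),
    integral_mul_pd1 hf hg.pd1, integral_mul_pd2 hf hg.pd2]
  ring

theorem integral_mul_lap_comm {f g : ℝ × ℝ → ℝ} (hf : SP f) (hg : SP g) :
    ∫ x in Omega2, f x * lap g x = ∫ x in Omega2, lap f x * g x := by
  have h := integral_mul_lap hg hf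
  rw [integral_mul_lap hf hg]
  simp only [mul_comm (lap f _), h, mul_comm (pd1 f _), mul_comm (pd2 f _)]

/-- Cauchy–Schwarz in the form `Q² ≤ P R ⟹ (∫ Q)² ≤ ∫ P ∫ R`. -/
theorem cauchy_schwarz_Omega2 {P Q R : ℝ × ℝ → ℝ} (hP : Continuous P) (hQ : Continuous Q)
    (hR : Continuous R) (hP0 : ∀ x, 0 ≤ P x) (hR0 : ∀ x, 0 ≤ R x)
    (h : ∀ x, Q x ^ 2 ≤ P x * R x) :
    (∫ x in Omega2, Q x) ^ 2 ≤ (∫ x in Omega2, P x) * ∫ x in Omega2, R x := by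
  have key : ∀ t : ℝ, 0 ≤ (∫ x in Omega2, R x) * (t * t) + (2 * ∫ x in Omega2, Q x) * t
      + ∫ x in Omega2, P x := by
    intro t
    have h1 : (∫ x in Omega2, R x) * (t * t) + (2 * ∫ x in Omega2, Q x) * t
        + ∫ x in Omega2, P x = ∫ x in Omega2, (R x * (t * t) + Q x * (2 * t) + P x) := by
      rw [integral_add (integrableOn_Omega2 (by fun_prop)) (integrableOn_Omega2 hP),
        integral_add (integrableOn_Omega2 (by fun_prop)) (integrableOn_Omega2 (by fun_prop)),
        MeasureTheory.integral_mul_const, MeasureTheory.integral_mul_const]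
      ring
    rw [h1]
    refine integral_nonneg fun x => ?_
    simp only [Pi.zero_apply]
    have hx := h x
    rcases (hR0 x).eq_or_lt with h0 | h0
    · have hq : Q x = 0 := by
        rw [← h0] at hx
        exact pow_eq_zero_iff (two_ne_zero) |>.1 (le_antisymm (by linarith) (sq_nonneg _))
      rw [hq, ← h0]
      simpa using hP0 x
    · have : 0 ≤ R x * (R x * (t * t) + Q x * (2 * t) + P x) := by
        nlinarith [sq_nonneg (R x * t + Q x)]
      exact nonneg_of_mul_nonneg_right this h0
  have := discrim_le_zero key
  rw [discrim] at this
  nlinarith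

/-! ### Ladyzhenskaya's inequality and the trilinear bound -/

/-- One-dimensional Sobolev bound of a value by the mean plus the total variation. -/
theorem le_mean_add_variation {g g' : ℝ → ℝ} (hg : ∀ t, HasDerivAt g (g' t) t)
    (hg' : Continuous g') {t : ℝ} (ht : t ∈ Icc (0 : ℝ) (2 * π)) :
    g t ≤ ∫ s in (0 : ℝ)..(2 * π), (g s / (2 * π) + |g' s|) := by
  have hgc : Continuous g := continuous_iff_continuousAt.2 fun t => (hg t).continuousAt
  have hpi := two_pi_pos
  have h1 : ∀ s ∈ Icc (0 : ℝ) (2 * π), g t - ∫ r in (0 : ℝ)..(2 * π), |g' r| ≤ g s := by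
    intro s hs
    have h2 : ∫ r in s..t, g' r = g t - g s :=
      intervalIntegral.integral_eq_sub_of_hasDerivAt (fun x _ => hg x)
        (hg'.intervalIntegrable _ _)
    have h3 : |∫ r in s..t, g' r| ≤ |∫ r in s..t, (|g' r|)| := by
      simpa [Real.norm_eq_abs] using
        intervalIntegral.norm_integral_le_abs_integral_norm (f := g') (a := s) (b := t)
          (μ := volume)
    have h4 : |∫ r in s..t, (|g' r|)| ≤ |∫ r in (0 : ℝ)..(2 * π), (|g' r|)| := by
      apply intervalIntegral.abs_integral_mono_interval
      · rw [uIoc_of_le hpi.le]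
        intro r hr
        rw [mem_uIoc] at hr
        rcases hr with hr | hr
        · exact ⟨lt_of_le_of_lt hs.1 hr.1, hr.2.trans ht.2⟩
        · exact ⟨lt_of_le_of_lt ht.1 hr.1, hr.2.trans hs.2⟩
      · exact Filter.Eventually.of_forall fun r => abs_nonneg _
      · exact hg'.abs.intervalIntegrable _ _
    have h5 : 0 ≤ ∫ r in (0 : ℝ)..(2 * π), |g' r| :=
      intervalIntegral.integral_nonneg hpi.le fun r _ => abs_nonneg _
    rw [abs_of_nonneg h5] at h4
    have := le_abs_self (∫ r in s..t, g' r)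
    linarith
  have h6 := intervalIntegral.integral_mono_on hpi.le
    (continuous_const.intervalIntegrable _ _) (hgc.intervalIntegrable (μ := volume) _ _) h1
  rw [intervalIntegral.integral_const, smul_eq_mul, sub_zero] at h6
  rw [intervalIntegral.integral_add ((hgc.div_const _).intervalIntegrable _ _)
    (hg'.abs.intervalIntegrable _ _), intervalIntegral.integral_div]
  rw [← sub_le_iff_le_add, le_div_iff₀ hpi]
  linarith

/-- Ladyzhenskaya's inequality, stated for a nonnegative `q` in the role of `|u|²`: `q` is bounded
both by a function of `x₁` alone and by a function of `x₂` alone, and the product is integrated. -/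
theorem ladyzhenskaya {q : ℝ × ℝ → ℝ} (hq : SP q) (hq0 : ∀ x, 0 ≤ q x) :
    ∫ x in Omega2, q x ^ 2 ≤ (∫ x in Omega2, (q x / (2 * π) + |pd2 q x|)) *
      ∫ x in Omega2, (q x / (2 * π) + |pd1 q x|) := by
  have hc := hq.continuous
  have hc1 := hq.pd1.continuous
  have hc2 := hq.pd2.continuous
  rw [integral_Omega2 (f := fun x => q x / (2 * π) + |pd2 q x|) (by fun_prop),
    integral_Omega2' (f := fun x => q x / (2 * π) + |pd1 q x|) (by fun_prop)]
  set A : ℝ → ℝ := fun a => ∫ b in (0 : ℝ)..(2 * π), (q (a, b) / (2 * π) + |pd2 q (a, b)|) with hA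
  set B : ℝ → ℝ := fun b => ∫ a in (0 : ℝ)..(2 * π), (q (a, b) / (2 * π) + |pd1 q (a, b)|) with hB
  have hAc : Continuous A :=
    intervalIntegral.continuous_parametric_intervalIntegral_of_continuous'
      (f := fun a b => q (a, b) / (2 * π) + |pd2 q (a, b)|) (by fun_prop) _ _
  have hBc : Continuous B :=
    intervalIntegral.continuous_parametric_intervalIntegral_of_continuous'
      (f := fun b a => q (a, b) / (2 * π) + |pd1 q (a, b)|) (by fun_prop) _ _
  have hmul : (∫ a in (0 : ℝ)..(2 * π), A a) * ∫ b in (0 : ℝ)..(2 * π), B b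
      = ∫ x in Omega2, A x.1 * B x.2 := by
    simp only [intervalIntegral.integral_of_le two_pi_pos.le, ← integral_Icc_eq_integral_Ioc]
    exact (setIntegral_prod_mul (μ := volume) (ν := volume) A B _ _).symm
  rw [hmul]
  refine setIntegral_mono_on (integrableOn_Omega2 (by fun_prop)) (integrableOn_Omega2 (by fun_prop))
    measurableSet_Omega2 fun x hx => ?_
  have h1 : q x ≤ A x.1 :=
    le_mean_add_variation (g := fun s => q (x.1, s)) (g' := fun s => pd2 q (x.1, s))
      (fun t => hasDerivAt_pd2 hq.differentiable (x.1, t)) (by fun_prop) hx.2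
  have h2 : q x ≤ B x.2 :=
    le_mean_add_variation (g := fun s => q (s, x.2)) (g' := fun s => pd1 q (s, x.2))
      (fun t => hasDerivAt_pd1 hq.differentiable (t, x.2)) (by fun_prop) hx.1
  rw [sq]
  exact mul_le_mul h1 h2 (hq0 x) ((hq0 x).trans h1)

/-- The real-number arithmetic combining Ladyzhenskaya's inequality with the interpolation of
`‖∇u‖²`; here `Y = ‖u‖²`, `D = ‖Δu‖²`, `G = ‖∇u‖²`, `M = ‖u‖₄⁴` and `V₁`, `V₂` are the `L¹` norms of
the partial derivatives of `|u|²`. -/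
theorem trilinear_arith {Y D G V1 V2 M : ℝ} (hY0 : 0 ≤ Y) (hpoinc : Y ≤ D) (hG0 : 0 ≤ G)
    (hV10 : 0 ≤ V1) (hGYD : G ^ 2 ≤ Y * D) (hV1 : V1 ^ 2 ≤ 4 * (Y * G))
    (hV2 : V2 ^ 2 ≤ 4 * (Y * G)) (hlady : M ≤ (Y / (2 * π) + V2) * (Y / (2 * π) + V1)) :
    M * G ≤ (3 * Y * √D) ^ 2 := by
  have hD0 : 0 ≤ D := hY0.trans hpoinc
  have hs : √D ^ 2 = D := Real.sq_sqrt hD0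
  have hy : √Y ^ 2 = Y := Real.sq_sqrt hY0
  have hgg : √G ^ 2 = G := Real.sq_sqrt hG0
  have hs0 := Real.sqrt_nonneg D
  have hy0 := Real.sqrt_nonneg Y
  have hg0 := Real.sqrt_nonneg G
  have hyd : √Y ≤ √D := Real.sqrt_le_sqrt hpoinc
  have hGle : G ≤ √Y * √D := by
    apply le_of_sq_le_sq _ (by positivity)
    rw [mul_pow, hs, hy]; exact hGYD
  have hV1' : V1 ≤ 2 * √Y * √G := by
    apply le_of_sq_le_sq _ (by positivity)
    rw [mul_pow, mul_pow, hgg, hy]; linarith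
  have hV2' : V2 ≤ 2 * √Y * √G := by
    apply le_of_sq_le_sq _ (by positivity)
    rw [mul_pow, mul_pow, hgg, hy]; linarith
  have hYpi : Y / (2 * π) ≤ Y := div_le_self hY0 (by linarith [Real.pi_gt_three])
  have hYpi0 : 0 ≤ Y / (2 * π) := by positivity
  have hM : M ≤ (Y + 2 * √Y * √G) ^ 2 := by
    rw [sq]
    exact hlady.trans (mul_le_mul (by linarith) (by linarith) (by linarith) (by positivity))
  have hGD : √G ≤ √D := by
    apply Real.sqrt_le_sqrt
    nlinarith
  have h3 : (Y + 2 * √Y * √G) * √G ≤ 3 * Y * √D := by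
    have a1 : Y * √G ≤ Y * √D := mul_le_mul_of_nonneg_left hGD hY0
    have a2 : √Y * G ≤ √Y * (√Y * √D) := mul_le_mul_of_nonneg_left hGle hy0
    nlinarith
  calc M * G ≤ (Y + 2 * √Y * √G) ^ 2 * √G ^ 2 := by
        rw [hgg]; exact mul_le_mul_of_nonneg_right hM hG0
    _ = ((Y + 2 * √Y * √G) * √G) ^ 2 := by ring
    _ ≤ _ := pow_le_pow_left₀ (by positivity) h3 2

/-- The trilinear bound `|∫ u·(u·∇)u| ≤ 3 ‖u‖² ‖Δu‖`, for fields satisfying `‖u‖ ≤ ‖Δu‖`. -/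
theorem trilinear_bound {v : ℝ × ℝ → ℝ × ℝ} (h1 : SP fun y => (v y).1) (h2 : SP fun y => (v y).2)
    (hpoinc : l2sq v ≤ l2sqLap v) :
    |∫ x in Omega2, ((v x).1 * adv v (fun y => (v y).1) x + (v x).2 * adv v (fun y => (v y).2) x)|
      ≤ 3 * l2sq v * √(l2sqLap v) := by
  set f : ℝ × ℝ → ℝ := fun y => (v y).1 with hf
  set g : ℝ × ℝ → ℝ := fun y => (v y).2 with hg
  have hfc := h1.continuous
  have hgc := h2.continuous
  have hf1 := h1.pd1.continuous
  have hf2 := h1.pd2.continuous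
  have hg1 := h2.pd1.continuous
  have hg2 := h2.pd2.continuous
  have hfl := h1.lap.continuous
  have hgl := h2.lap.continuous
  set Y := l2sq v with hY
  set D := l2sqLap v with hD
  have hYe : Y = ∫ x in Omega2, (f x ^ 2 + g x ^ 2) := rfl
  have hDe : D = ∫ x in Omega2, (lap f x ^ 2 + lap g x ^ 2) := rfl
  have hY0 : 0 ≤ Y := integral_nonneg fun x => add_nonneg (sq_nonneg _) (sq_nonneg _)
  have hD0 : 0 ≤ D := hY0.trans hpoinc
  set G := ∫ x in Omega2, (pd1 f x ^ 2 + pd2 f x ^ 2 + (pd1 g x ^ 2 + pd2 g x ^ 2)) with hG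
  have hG0 : 0 ≤ G := integral_nonneg fun x => by
    simp only [Pi.zero_apply]; positivity
  -- Cauchy–Schwarz in `‖∇u‖² = -∫ u·Δu`
  have hGYD : G ^ 2 ≤ Y * D := by
    have e : ∫ x in Omega2, (f x * lap f x + g x * lap g x) = -G := by
      rw [integral_add (integrableOn_Omega2 (by fun_prop)) (integrableOn_Omega2 (by fun_prop)),
        integral_mul_lap h1 h1, integral_mul_lap h2 h2, hG,
        integral_add (f := fun x => pd1 f x ^ 2 + pd2 f x ^ 2)
          (integrableOn_Omega2 (by fun_prop)) (integrableOn_Omega2 (by fun_prop))]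
      simp only [sq]
      ring
    have := cauchy_schwarz_Omega2 (P := fun x => f x ^ 2 + g x ^ 2)
      (Q := fun x => f x * lap f x + g x * lap g x) (R := fun x => lap f x ^ 2 + lap g x ^ 2)
      (by fun_prop) (by fun_prop) (by fun_prop) (fun x => by positivity) (fun x => by positivity)
      (fun x => by nlinarith [sq_nonneg (f x * lap g x - g x * lap f x)])
    rw [e, neg_sq] at this
    exact this
  set q : ℝ × ℝ → ℝ := fun x => f x * f x + g x * g x with hq
  have hqs : SP q := (h1.mul h1).add (h2.mul h2)
  have hqc := hqs.continuous
  have hq1 := hqs.pd1.continuous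
  have hq2 := hqs.pd2.continuous
  have e1 : ∀ x, pd1 q x = 2 * (f x * pd1 f x + g x * pd1 g x) := fun x => by
    have := ((hasDerivAt_pd1 (h1.mul h1).differentiable x).add
      (hasDerivAt_pd1 (h2.mul h2).differentiable x)).deriv
    rw [pd1_mul h1 h1, pd1_mul h2 h2] at this
    refine Eq.trans this ?_
    ring
  have e2 : ∀ x, pd2 q x = 2 * (f x * pd2 f x + g x * pd2 g x) := fun x => by
    have := ((hasDerivAt_pd2 (h1.mul h1).differentiable x).add
      (hasDerivAt_pd2 (h2.mul h2).differentiable x)).deriv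
    rw [pd2_mul h1 h1, pd2_mul h2 h2] at this
    refine Eq.trans this ?_
    ring
  have hqY : ∫ x in Omega2, q x = Y := by
    rw [hYe]; simp only [hq, sq]
  have hV1 : (∫ x in Omega2, |pd1 q x|) ^ 2 ≤ 4 * (Y * G) := by
    have := cauchy_schwarz_Omega2 (P := fun x => 4 * q x)
      (Q := fun x => |pd1 q x|)
      (R := fun x => pd1 f x ^ 2 + pd2 f x ^ 2 + (pd1 g x ^ 2 + pd2 g x ^ 2))
      (by fun_prop) (by fun_prop) (by fun_prop)
      (fun x => by simp only [hq]; nlinarith [sq_nonneg (f x), sq_nonneg (g x)])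
      (fun x => by positivity)
      (fun x => by
        rw [sq_abs, e1]
        simp only [hq]
        nlinarith [sq_nonneg (f x * pd1 g x - g x * pd1 f x), sq_nonneg (f x * pd2 f x),
          sq_nonneg (f x * pd2 g x), sq_nonneg (g x * pd2 f x), sq_nonneg (g x * pd2 g x)])
    rw [MeasureTheory.integral_const_mul, hqY] at this
    linarith
  have hV2 : (∫ x in Omega2, |pd2 q x|) ^ 2 ≤ 4 * (Y * G) := by
    have := cauchy_schwarz_Omega2 (P := fun x => 4 * q x)
      (Q := fun x => |pd2 q x|)
      (R := fun x => pd1 f x ^ 2 + pd2 f x ^ 2 + (pd1 g x ^ 2 + pd2 g x ^ 2))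
      (by fun_prop) (by fun_prop) (by fun_prop)
      (fun x => by simp only [hq]; nlinarith [sq_nonneg (f x), sq_nonneg (g x)])
      (fun x => by positivity)
      (fun x => by
        rw [sq_abs, e2]
        simp only [hq]
        nlinarith [sq_nonneg (f x * pd2 g x - g x * pd2 f x), sq_nonneg (f x * pd1 f x),
          sq_nonneg (f x * pd1 g x), sq_nonneg (g x * pd1 f x), sq_nonneg (g x * pd1 g x)])
    rw [MeasureTheory.integral_const_mul, hqY] at this
    linarith
  have hlady := ladyzhenskaya hqs (fun x => add_nonneg (mul_self_nonneg _) (mul_self_nonneg _))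
  rw [integral_add (integrableOn_Omega2 (by fun_prop)) (integrableOn_Omega2 (by fun_prop)),
    integral_add (integrableOn_Omega2 (by fun_prop)) (integrableOn_Omega2 (by fun_prop)),
    MeasureTheory.integral_div, hqY] at hlady
  have hB := cauchy_schwarz_Omega2 (P := fun x => q x ^ 2)
    (Q := fun x => f x * adv v f x + g x * adv v g x)
    (R := fun x => pd1 f x ^ 2 + pd2 f x ^ 2 + (pd1 g x ^ 2 + pd2 g x ^ 2))
    (by fun_prop) (by
      change Continuous fun x => f x * (f x * pd1 f x + g x * pd2 f x)
        + g x * (f x * pd1 g x + g x * pd2 g x)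
      fun_prop) (by fun_prop) (fun x => by positivity)
    (fun x => by positivity)
    (fun x => by
      simp only [hq]
      have : f x * adv v f x + g x * adv v g x
        = (f x * f x) * pd1 f x + (f x * g x) * pd2 f x + (g x * f x) * pd1 g x
          + (g x * g x) * pd2 g x := by
        simp only [adv, hf, hg]; ring
      rw [this]
      generalize f x = a
      generalize g x = b
      generalize pd1 f x = p
      generalize pd2 f x = r
      generalize pd1 g x = s
      generalize pd2 g x = t
      nlinarith [sq_nonneg (a * a * r - a * b * p), sq_nonneg (a * a * s - b * a * p),
        sq_nonneg (a * a * t - b * b * p), sq_nonneg (a * b * s - b * a * r),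
        sq_nonneg (a * b * t - b * b * r), sq_nonneg (b * a * t - b * b * s)])
  apply abs_le_of_sq_le_sq _ (by positivity)
  refine hB.trans ?_
  exact trilinear_arith hY0 hpoinc hG0
    (integral_nonneg fun x => abs_nonneg _) hGYD hV1 hV2 hlady

/-! ### Fourier coefficients and Parseval's identity -/

theorem fourierCoeffOn_two_pi (g : ℝ → ℂ) (n : ℤ) :
    fourierCoeffOn two_pi_pos g n
      = (2 * π)⁻¹ • ∫ b in (0 : ℝ)..(2 * π), g b * Complex.exp (-Complex.I * ((n : ℂ) * (b : ℂ))) := by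
  rw [fourierCoeffOn_eq_integral, sub_zero, one_div]
  congr 1
  refine intervalIntegral.integral_congr fun b _ => ?_
  simp only [fourier_coe_apply, smul_eq_mul]
  rw [mul_comm]
  congr 2
  have : (π : ℂ) ≠ 0 := by exact_mod_cast Real.pi_ne_zero
  push_cast
  field_simp

theorem parseval_interval {g : ℝ → ℂ} (hg : Continuous g) :
    HasSum (fun n : ℤ => ‖fourierCoeffOn two_pi_pos g n‖ ^ 2)
      ((2 * π)⁻¹ * ∫ b in (0 : ℝ)..(2 * π), ‖g b‖ ^ 2) := by
  have hm : MemLp g 2 (volume.restrict (Ioc 0 (2 * π))) :=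
    (memLp_two_iff_integrable_sq_norm hg.aestronglyMeasurable).2
      ((hg.norm.pow 2).integrableOn_Ioc)
  simpa using hasSum_sq_fourierCoeffOn two_pi_pos hm

/-- Parseval's identity on the two-dimensional torus, by iterating the one-dimensional one. -/
theorem parseval {f : ℝ × ℝ → ℝ} (hf : Continuous f) :
    HasSum (fun ℓ : ℤ × ℤ => ‖fc f ℓ‖ ^ 2) (((2 * π) ^ 2)⁻¹ * ∫ x in Omega2, f x ^ 2) := by
  -- `c m a` is the `m`-th partial Fourier coefficient in the second variable
  set c : ℤ → ℝ → ℂ := fun m a => fourierCoeffOn two_pi_pos (fun b => ((f (a, b) : ℝ) : ℂ)) m with hc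
  have hcc : ∀ m, Continuous (c m) := by
    intro m
    simp only [hc, fourierCoeffOn_two_pi]
    exact (intervalIntegral.continuous_parametric_intervalIntegral_of_continuous'
      (f := fun a b => ((f (a, b) : ℝ) : ℂ) * Complex.exp (-Complex.I * ((m : ℂ) * (b : ℂ))))
      (by fun_prop) _ _).const_smul ((2 * π)⁻¹)
  have hfc : ∀ n m : ℤ, fc f (n, m) = fourierCoeffOn two_pi_pos (c m) n := by
    intro n m
    rw [fourierCoeffOn_two_pi, fc, integral_Omega2 (by fun_prop)]
    simp only [hc, fourierCoeffOn_two_pi]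
    rw [sq, mul_inv, mul_smul]
    congr 1
    rw [← intervalIntegral.integral_smul]
    refine intervalIntegral.integral_congr fun a _ => ?_
    simp only [smul_mul_assoc]
    congr 1
    rw [← intervalIntegral.integral_mul_const]
    refine intervalIntegral.integral_congr fun b _ => ?_
    simp only [mul_assoc, ← Complex.exp_add]
    congr 2
    ring
  have hin : ∀ a, HasSum (fun m : ℤ => ‖c m a‖ ^ 2)
      ((2 * π)⁻¹ * ∫ b in (0 : ℝ)..(2 * π), f (a, b) ^ 2) := by
    intro a
    have := parseval_interval (g := fun b => ((f (a, b) : ℝ) : ℂ)) (by fun_prop)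
    simpa only [Complex.norm_real, Real.norm_eq_abs, sq_abs] using this
  have hFc : Continuous fun a => ((2 * π)⁻¹ * ∫ b in (0 : ℝ)..(2 * π), f (a, b) ^ 2) :=
    (intervalIntegral.continuous_parametric_intervalIntegral_of_continuous'
      (f := fun a b => f (a, b) ^ 2) (by fun_prop) _ _).const_mul _
  have hout : HasSum (fun m : ℤ => ∫ a in (0 : ℝ)..(2 * π), ‖c m a‖ ^ 2)
      (∫ a in (0 : ℝ)..(2 * π), ((2 * π)⁻¹ * ∫ b in (0 : ℝ)..(2 * π), f (a, b) ^ 2)) := by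
    refine intervalIntegral.hasSum_integral_of_dominated_convergence (fun m a => ‖c m a‖ ^ 2)
      (fun m => ((hcc m).norm.pow 2).aestronglyMeasurable) (fun m => ?_) ?_ ?_ ?_
    · exact Filter.Eventually.of_forall fun a _ => by simp
    · exact Filter.Eventually.of_forall fun a _ => (hin a).summable
    · simp only [fun a => (hin a).tsum_eq]
      exact hFc.intervalIntegrable _ _
    · exact Filter.Eventually.of_forall fun a _ => hin a
  have hS : HasSum (fun m : ℤ => (2 * π)⁻¹ * ∫ a in (0 : ℝ)..(2 * π), ‖c m a‖ ^ 2)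
      (((2 * π) ^ 2)⁻¹ * ∫ x in Omega2, f x ^ 2) := by
    have := hout.mul_left (2 * π)⁻¹
    rw [intervalIntegral.integral_const_mul, ← mul_assoc, ← mul_inv, ← sq] at this
    rwa [integral_Omega2 (f := fun x => f x ^ 2) (by fun_prop)]
  have hfib : ∀ m : ℤ, HasSum (fun n : ℤ => ‖fc f (n, m)‖ ^ 2)
      ((2 * π)⁻¹ * ∫ a in (0 : ℝ)..(2 * π), ‖c m a‖ ^ 2) := by
    intro m
    simp only [hfc]
    exact parseval_interval (hcc m)
  have hsum : Summable fun p : ℤ × ℤ => ‖fc f (p.2, p.1)‖ ^ 2 := by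
    rw [summable_prod_of_nonneg (fun p => sq_nonneg _)]
    refine ⟨fun m => (hfib m).summable, ?_⟩
    simp only [fun m => (hfib m).tsum_eq]
    exact hS.summable
  have h1 := hsum.hasSum.prod_fiberwise hfib
  have h2 := hsum.hasSum
  rw [h1.unique hS] at h2
  exact (Equiv.prodComm ℤ ℤ).hasSum_iff.1 h2

theorem SP.trig {φ : ℝ → ℝ} (hφ : ContDiff ℝ ((⊤ : ℕ∞) : WithTop ℕ∞) φ)
    (hper : Function.Periodic φ (2 * π)) (ℓ : ℤ × ℤ) :
    SP fun x => φ ((ℓ.1 : ℝ) * x.1 + (ℓ.2 : ℝ) * x.2) := by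
  refine ⟨hφ.comp (by fun_prop), fun x => ?_, fun x => ?_⟩
  · have := hper.int_mul ℓ.1 ((ℓ.1 : ℝ) * x.1 + (ℓ.2 : ℝ) * x.2)
    rw [← this]
    congr 1
    ring
  · have := hper.int_mul ℓ.2 ((ℓ.1 : ℝ) * x.1 + (ℓ.2 : ℝ) * x.2)
    rw [← this]
    congr 1
    ring

theorem lap_cos (ℓ : ℤ × ℤ) (x : ℝ × ℝ) :
    lap (fun y => Real.cos ((ℓ.1 : ℝ) * y.1 + (ℓ.2 : ℝ) * y.2)) x
      = -((ℓ.1 : ℝ) ^ 2 + (ℓ.2 : ℝ) ^ 2) * Real.cos ((ℓ.1 : ℝ) * x.1 + (ℓ.2 : ℝ) * x.2) := by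
  have a1 : ∀ s b : ℝ, HasDerivAt (fun s : ℝ => (ℓ.1 : ℝ) * s + (ℓ.2 : ℝ) * b) (ℓ.1 : ℝ) s :=
    fun s b => by simpa using ((hasDerivAt_id s).const_mul (ℓ.1 : ℝ)).add_const ((ℓ.2 : ℝ) * b)
  have a2 : ∀ a s : ℝ, HasDerivAt (fun s : ℝ => (ℓ.1 : ℝ) * a + (ℓ.2 : ℝ) * s) (ℓ.2 : ℝ) s :=
    fun a s => by simpa using ((hasDerivAt_id s).const_mul (ℓ.2 : ℝ)).const_add ((ℓ.1 : ℝ) * a)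
  have d1 : pd1 (fun y => Real.cos ((ℓ.1 : ℝ) * y.1 + (ℓ.2 : ℝ) * y.2)) = fun y =>
      -Real.sin ((ℓ.1 : ℝ) * y.1 + (ℓ.2 : ℝ) * y.2) * ℓ.1 :=
    funext fun y => (a1 y.1 y.2).cos.deriv
  have d2 : pd2 (fun y => Real.cos ((ℓ.1 : ℝ) * y.1 + (ℓ.2 : ℝ) * y.2)) = fun y =>
      -Real.sin ((ℓ.1 : ℝ) * y.1 + (ℓ.2 : ℝ) * y.2) * ℓ.2 :=
    funext fun y => (a2 y.1 y.2).cos.deriv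
  have e1 : pd1 (fun y => -Real.sin ((ℓ.1 : ℝ) * y.1 + (ℓ.2 : ℝ) * y.2) * ℓ.1) x =
      -(Real.cos ((ℓ.1 : ℝ) * x.1 + (ℓ.2 : ℝ) * x.2) * ℓ.1) * ℓ.1 :=
    ((a1 x.1 x.2).sin.neg.mul_const _).deriv
  have e2 : pd2 (fun y => -Real.sin ((ℓ.1 : ℝ) * y.1 + (ℓ.2 : ℝ) * y.2) * ℓ.2) x =
      -(Real.cos ((ℓ.1 : ℝ) * x.1 + (ℓ.2 : ℝ) * x.2) * ℓ.2) * ℓ.2 :=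
    ((a2 x.1 x.2).sin.neg.mul_const _).deriv
  rw [lap, d1, d2, e1, e2]
  ring

theorem lap_sin (ℓ : ℤ × ℤ) (x : ℝ × ℝ) :
    lap (fun y => Real.sin ((ℓ.1 : ℝ) * y.1 + (ℓ.2 : ℝ) * y.2)) x
      = -((ℓ.1 : ℝ) ^ 2 + (ℓ.2 : ℝ) ^ 2) * Real.sin ((ℓ.1 : ℝ) * x.1 + (ℓ.2 : ℝ) * x.2) := by
  have a1 : ∀ s b : ℝ, HasDerivAt (fun s : ℝ => (ℓ.1 : ℝ) * s + (ℓ.2 : ℝ) * b) (ℓ.1 : ℝ) s :=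
    fun s b => by simpa using ((hasDerivAt_id s).const_mul (ℓ.1 : ℝ)).add_const ((ℓ.2 : ℝ) * b)
  have a2 : ∀ a s : ℝ, HasDerivAt (fun s : ℝ => (ℓ.1 : ℝ) * a + (ℓ.2 : ℝ) * s) (ℓ.2 : ℝ) s :=
    fun a s => by simpa using ((hasDerivAt_id s).const_mul (ℓ.2 : ℝ)).const_add ((ℓ.1 : ℝ) * a)
  have d1 : pd1 (fun y => Real.sin ((ℓ.1 : ℝ) * y.1 + (ℓ.2 : ℝ) * y.2)) = fun y =>
      Real.cos ((ℓ.1 : ℝ) * y.1 + (ℓ.2 : ℝ) * y.2) * ℓ.1 :=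
    funext fun y => (a1 y.1 y.2).sin.deriv
  have d2 : pd2 (fun y => Real.sin ((ℓ.1 : ℝ) * y.1 + (ℓ.2 : ℝ) * y.2)) = fun y =>
      Real.cos ((ℓ.1 : ℝ) * y.1 + (ℓ.2 : ℝ) * y.2) * ℓ.2 :=
    funext fun y => (a2 y.1 y.2).sin.deriv
  have e1 : pd1 (fun y => Real.cos ((ℓ.1 : ℝ) * y.1 + (ℓ.2 : ℝ) * y.2) * ℓ.1) x =
      (-Real.sin ((ℓ.1 : ℝ) * x.1 + (ℓ.2 : ℝ) * x.2) * ℓ.1) * ℓ.1 :=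
    ((a1 x.1 x.2).cos.mul_const _).deriv
  have e2 : pd2 (fun y => Real.cos ((ℓ.1 : ℝ) * y.1 + (ℓ.2 : ℝ) * y.2) * ℓ.2) x =
      (-Real.sin ((ℓ.1 : ℝ) * x.1 + (ℓ.2 : ℝ) * x.2) * ℓ.2) * ℓ.2 :=
    ((a2 x.1 x.2).cos.mul_const _).deriv
  rw [lap, d1, d2, e1, e2]
  ring

theorem fc_eq_cos_sin {f : ℝ × ℝ → ℝ} (hf : Continuous f) (ℓ : ℤ × ℤ) :
    fc f ℓ = ((2 * π) ^ 2)⁻¹ •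
      (((∫ x in Omega2, f x * Real.cos ((ℓ.1 : ℝ) * x.1 + (ℓ.2 : ℝ) * x.2) : ℝ) : ℂ)
        - Complex.I *
          ((∫ x in Omega2, f x * Real.sin ((ℓ.1 : ℝ) * x.1 + (ℓ.2 : ℝ) * x.2) : ℝ) : ℂ)) := by
  rw [fc]
  congr 1
  rw [← integral_complex_ofReal, ← integral_complex_ofReal, ← MeasureTheory.integral_const_mul,
    ← integral_sub (integrableOn_Omega2 (by fun_prop)) (integrableOn_Omega2 (by fun_prop))]
  congr 1
  funext x
  rw [neg_mul, mul_comm Complex.I, ← neg_mul, Complex.exp_mul_I, Complex.cos_neg, Complex.sin_neg]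
  push_cast
  ring

/-- The Laplacian acts on Fourier coefficients as multiplication by `-|ℓ|²`. -/
theorem fc_lap {f : ℝ × ℝ → ℝ} (hf : SP f) (ℓ : ℤ × ℤ) :
    fc (lap f) ℓ = -(((ℓ.1 : ℝ) ^ 2 + (ℓ.2 : ℝ) ^ 2 : ℝ) : ℂ) * fc f ℓ := by
  rw [fc_eq_cos_sin hf.continuous, fc_eq_cos_sin hf.lap.continuous,
    ← integral_mul_lap_comm hf (SP.trig Real.contDiff_cos Real.cos_periodic ℓ),
    ← integral_mul_lap_comm hf (SP.trig Real.contDiff_sin Real.sin_periodic ℓ)]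
  simp only [lap_cos, lap_sin, mul_left_comm (f _)]
  rw [MeasureTheory.integral_const_mul, MeasureTheory.integral_const_mul]
  simp only [Complex.real_smul]
  push_cast
  ring

theorem norm_fc_lap_sq {f : ℝ × ℝ → ℝ} (hf : SP f) (ℓ : ℤ × ℤ) :
    ‖fc (lap f) ℓ‖ ^ 2 = ((ℓ.1 : ℝ) ^ 2 + (ℓ.2 : ℝ) ^ 2) ^ 2 * ‖fc f ℓ‖ ^ 2 := by
  rw [fc_lap hf, norm_mul, norm_neg, Complex.norm_real, mul_pow, Real.norm_eq_abs, sq_abs]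

/-! ### Interpolation and absorption of the nonlinear term -/

theorem coefAbsSq_nonneg (v : ℝ × ℝ → ℝ × ℝ) (ℓ : ℤ × ℤ) : 0 ≤ coefAbsSq v ℓ :=
  add_nonneg (sq_nonneg _) (sq_nonneg _)

theorem one_le_freq {ℓ : ℤ × ℤ} (hℓ : ℓ ≠ 0) : (1 : ℝ) ≤ (ℓ.1 : ℝ) ^ 2 + (ℓ.2 : ℝ) ^ 2 := by
  have h : (1 : ℤ) ≤ ℓ.1 ^ 2 + ℓ.2 ^ 2 := by
    by_contra hlt
    have h1 : ℓ.1 ^ 2 + ℓ.2 ^ 2 ≤ 0 := by omega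
    have a1 : ℓ.1 = 0 := by nlinarith [sq_nonneg ℓ.1, sq_nonneg ℓ.2]
    have a2 : ℓ.2 = 0 := by nlinarith [sq_nonneg ℓ.1, sq_nonneg ℓ.2]
    exact hℓ (Prod.ext a1 a2)
  exact_mod_cast h

theorem hasSum_coefAbsSq {v : ℝ × ℝ → ℝ × ℝ} (h1 : SP fun y => (v y).1)
    (h2 : SP fun y => (v y).2) : HasSum (coefAbsSq v) (((2 * π) ^ 2)⁻¹ * l2sq v) := by
  have hf := h1.continuous
  have hg := h2.continuous
  have := (parseval h1.continuous).add (parseval h2.continuous)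
  rw [← mul_add, ← integral_add (integrableOn_Omega2 (by fun_prop))
    (integrableOn_Omega2 (by fun_prop))] at this
  exact this

theorem hasSum_coefAbsSq_lap {v : ℝ × ℝ → ℝ × ℝ} (h1 : SP fun y => (v y).1)
    (h2 : SP fun y => (v y).2) :
    HasSum (fun ℓ : ℤ × ℤ => ((ℓ.1 : ℝ) ^ 2 + (ℓ.2 : ℝ) ^ 2) ^ 2 * coefAbsSq v ℓ)
      (((2 * π) ^ 2)⁻¹ * l2sqLap v) := by
  have hf := h1.lap.continuous
  have hg := h2.lap.continuous
  have := (parseval h1.lap.continuous).add (parseval h2.lap.continuous)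
  rw [← mul_add, ← integral_add (integrableOn_Omega2 (by fun_prop))
    (integrableOn_Omega2 (by fun_prop))] at this
  simp only [norm_fc_lap_sq h1, norm_fc_lap_sq h2, ← mul_add] at this
  exact this

/-- The zero mode of a mean-free field vanishes. -/
theorem coefAbsSq_zero {v : ℝ × ℝ → ℝ × ℝ} (hv : Continuous v)
    (hmean : (∫ x in Omega2, v x) = 0) : coefAbsSq v 0 = 0 := by
  have hi := integrableOn_Omega2 hv
  have e1 : ∫ x in Omega2, (v x).1 = 0 := by
    rw [← fst_integral hi, hmean]; rfl
  have e2 : ∫ x in Omega2, (v x).2 = 0 := by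
    rw [← snd_integral hi, hmean]; rfl
  simp [coefAbsSq, fc, integral_complex_ofReal, e1, e2]

/-- The Poincaré-type inequality `‖u‖ ≤ ‖Δu‖` for mean-free fields. -/
theorem poincare {v : ℝ × ℝ → ℝ × ℝ} (h1 : SP fun y => (v y).1)
    (h2 : SP fun y => (v y).2) (h0 : coefAbsSq v 0 = 0) : l2sq v ≤ l2sqLap v := by
  have h := hasSum_le (fun ℓ => ?_) (hasSum_coefAbsSq h1 h2) (hasSum_coefAbsSq_lap h1 h2)
  · exact le_of_mul_le_mul_left h (by positivity)
  · by_cases hℓ : ℓ = 0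
    · simp [hℓ, h0]
    · have := one_le_freq hℓ
      exact le_mul_of_one_le_left (coefAbsSq_nonneg v ℓ) (one_le_pow₀ this)

theorem hnormSq_nonneg (v : ℝ × ℝ → ℝ × ℝ) (κ : ℝ) : 0 ≤ hnormSq v κ := by
  refine mul_nonneg (by positivity) (tsum_nonneg fun ℓ => ?_)
  split_ifs
  · exact le_rfl
  · exact mul_nonneg (Real.rpow_nonneg (by positivity) _) (coefAbsSq_nonneg v ℓ)

/-- For `α ≥ 0` the weights `|ℓ|^{-2α}` are at most `1` away from the zero mode. -/
theorem hterm_le {v : ℝ × ℝ → ℝ × ℝ} {α : ℝ} (hα : 0 ≤ α) (ℓ : ℤ × ℤ) :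
    ‖(if ℓ = 0 then 0 else ((ℓ.1 : ℝ) ^ 2 + (ℓ.2 : ℝ) ^ 2) ^ (-α) * coefAbsSq v ℓ : ℝ)‖
      ≤ if ℓ = 0 then 0 else coefAbsSq v ℓ := by
  split_ifs with h
  · simp
  · have h1 := one_le_freq h
    rw [Real.norm_of_nonneg (mul_nonneg (Real.rpow_nonneg (by positivity) _)
      (coefAbsSq_nonneg v ℓ))]
    exact mul_le_of_le_one_left (coefAbsSq_nonneg v ℓ)
      (Real.rpow_le_one_of_one_le_of_nonpos h1 (by linarith))

theorem hasSum_hnormSq {v : ℝ × ℝ → ℝ × ℝ} (h1 : SP fun y => (v y).1)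
    (h2 : SP fun y => (v y).2) {α : ℝ} (hα : 0 ≤ α) :
    HasSum (fun ℓ : ℤ × ℤ => if ℓ = 0 then 0 else
      ((ℓ.1 : ℝ) ^ 2 + (ℓ.2 : ℝ) ^ 2) ^ (-α) * coefAbsSq v ℓ)
      (((2 * π) ^ 2)⁻¹ * hnormSq v (-α)) := by
  have hs : Summable (fun ℓ : ℤ × ℤ => if ℓ = 0 then 0 else
      ((ℓ.1 : ℝ) ^ 2 + (ℓ.2 : ℝ) ^ 2) ^ (-α) * coefAbsSq v ℓ) := by
    refine Summable.of_norm_bounded (hasSum_coefAbsSq h1 h2).summable fun ℓ => ?_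
    refine (hterm_le hα ℓ).trans ?_
    split_ifs
    · exact coefAbsSq_nonneg v ℓ
    · exact le_rfl
  have := hs.hasSum
  rw [hnormSq, inv_mul_cancel_left₀ (by positivity)]
  exact this

/-- Interpolation of `L²` between `Ḣ^{-α}` and `Ḣ²`, in additive form with a free cutoff `K`
for `|ℓ|²`. -/
theorem interpolation {v : ℝ × ℝ → ℝ × ℝ} (h1 : SP fun y => (v y).1)
    (h2 : SP fun y => (v y).2) (h0 : coefAbsSq v 0 = 0) {α : ℝ} (hα : 0 ≤ α)
    {K : ℝ} (hK : 0 < K) :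
    l2sq v ≤ K ^ α * hnormSq v (-α) + (K ^ 2)⁻¹ * l2sqLap v := by
  have hr := ((hasSum_hnormSq h1 h2 hα).mul_left (K ^ α)).add
    ((hasSum_coefAbsSq_lap h1 h2).mul_left ((K ^ 2)⁻¹))
  have h := hasSum_le (fun ℓ => ?_) (hasSum_coefAbsSq h1 h2) hr
  · rw [mul_left_comm (K ^ α), mul_left_comm (K ^ 2)⁻¹, ← mul_add] at h
    exact le_of_mul_le_mul_left h (by positivity)
  · by_cases hℓ : ℓ = 0
    · simp [hℓ, h0]
    · simp only [if_neg hℓ]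
      have hw := one_le_freq hℓ
      have hc := coefAbsSq_nonneg v ℓ
      set w := (ℓ.1 : ℝ) ^ 2 + (ℓ.2 : ℝ) ^ 2
      have hw0 : 0 < w := by linarith
      have a1 : 0 ≤ K ^ α * w ^ (-α) := by positivity
      have a2 : 0 ≤ (K ^ 2)⁻¹ * w ^ 2 := by positivity
      rw [← mul_assoc, ← mul_assoc, ← add_mul]
      apply le_mul_of_one_le_left hc
      rcases le_total w K with hle | hle
      · have : 1 ≤ K ^ α * w ^ (-α) := by
          rw [Real.rpow_neg hw0.le, ← div_eq_mul_inv, one_le_div (by positivity)]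
          exact Real.rpow_le_rpow hw0.le hle hα
        linarith
      · have : 1 ≤ (K ^ 2)⁻¹ * w ^ 2 := by
          rw [mul_comm, ← div_eq_mul_inv, one_le_div (by positivity)]
          exact pow_le_pow_left₀ hK.le hle 2
        linarith

/-- The constant `C₀` of the Grönwall estimate: `36 c` with `Y ≤ c H^{2/(2-α)}`, where
`c = (2 · 72^{α/2})^{2/(2-α)}` results from the cutoff `K² = 72 Y`. -/
def gronwallConst (α : ℝ) : ℝ := 36 * (2 * 72 ^ (α / 2)) ^ (2 / (2 - α))

theorem gronwallConst_pos (α : ℝ) : 0 < gronwallConst α := by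
  unfold gronwallConst; positivity

/-- The nonlinear term is absorbed by the dissipation up to a multiple of
`‖u‖_{Ḣ^{-α}}^{4/(2-α)} ‖u‖²`. -/
theorem nonlinear_absorb {v : ℝ × ℝ → ℝ × ℝ} (h1 : SP fun y => (v y).1)
    (h2 : SP fun y => (v y).2) (h0 : coefAbsSq v 0 = 0) {α : ℝ} (hα : 0 ≤ α) (hα2 : α < 2) :
    2 * |∫ x in Omega2, ((v x).1 * adv v (fun y => (v y).1) x
        + (v x).2 * adv v (fun y => (v y).2) x)|
      ≤ l2sqLap v + gronwallConst α * hnorm v (-α) ^ (4 / (2 - α)) * l2sq v := by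
  have hp := poincare h1 h2 h0
  have hB := trilinear_bound h1 h2 hp
  have hY0 : 0 ≤ l2sq v := integral_nonneg fun x => add_nonneg (sq_nonneg _) (sq_nonneg _)
  have hH0 := hnormSq_nonneg v (-α)
  have hinterp := fun K hK => interpolation h1 h2 h0 hα (K := K) hK
  have hD0 := hY0.trans hp
  have hCpos := gronwallConst_pos α
  have hh0 : 0 ≤ hnorm v (-α) ^ (4 / (2 - α)) := Real.rpow_nonneg (Real.sqrt_nonneg _) _
  have hbeta : 0 < 2 - α := by linarith
  have hh : hnorm v (-α) ^ (4 / (2 - α)) = hnormSq v (-α) ^ (2 / (2 - α)) := by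
    rw [hnorm, Real.sqrt_eq_rpow, ← Real.rpow_mul hH0]
    congr 1
    ring
  set Y := l2sq v
  set D := l2sqLap v
  set H := hnormSq v (-α)
  have hs : √D ^ 2 = D := Real.sq_sqrt hD0
  have hs0 := Real.sqrt_nonneg D
  rcases le_total (6 * Y) (√D) with hc | hc
  · have : 0 ≤ gronwallConst α * hnorm v (-α) ^ (4 / (2 - α)) * Y := by positivity
    nlinarith
  · rcases hY0.eq_or_lt with hz | hpos
    · have : √D = 0 := by linarith
      rw [this, ← hz] at hB
      rw [← hz]
      linarith
    -- the cutoff `K² = 72 ‖u‖²` makes the high-frequency part at most `‖u‖² / 2`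
    have hi := hinterp (√(72 * Y)) (Real.sqrt_pos.2 (by linarith))
    rw [Real.sq_sqrt (by linarith), Real.sqrt_eq_rpow, ← Real.rpow_mul (by linarith)] at hi
    have hD36 : D ≤ 36 * Y ^ 2 := by nlinarith
    have hhigh : (72 * Y)⁻¹ * D ≤ Y / 2 := by
      rw [inv_mul_le_iff₀ (by linarith)]
      nlinarith
    have hlow : Y ≤ 2 * ((72 * Y) ^ (1 / 2 * α) * H) := by linarith
    rw [Real.mul_rpow (by norm_num) hY0] at hlow
    have hpow : Y ^ ((2 - α) / 2) ≤ (2 * 72 ^ (α / 2)) * H := by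
      have e : Y = Y ^ ((2 - α) / 2) * Y ^ (1 / 2 * α) := by
        rw [← Real.rpow_add hpos]
        conv_lhs => rw [← Real.rpow_one Y]
        congr 1
        ring
      have hYa : 0 < Y ^ (1 / 2 * α) := Real.rpow_pos_of_pos hpos _
      rw [show α / 2 = 1 / 2 * α by ring]
      refine le_of_mul_le_mul_right ?_ hYa
      rw [← e]
      linarith
    have hfin : Y ≤ (2 * 72 ^ (α / 2)) ^ (2 / (2 - α)) * H ^ (2 / (2 - α)) := by
      rw [← Real.mul_rpow (by positivity) hH0]
      have := Real.rpow_le_rpow (by positivity) hpow (z := 2 / (2 - α)) (by positivity)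
      rwa [← Real.rpow_mul hY0, div_mul_div_comm, mul_comm (2 - α) 2,
        div_self (by positivity), Real.rpow_one] at this
    rw [hh, gronwallConst]
    have h36 : 6 * Y * √D ≤ 36 * Y * Y := by nlinarith
    have : 36 * Y * Y ≤ 36 * ((2 * 72 ^ (α / 2)) ^ (2 / (2 - α)) * H ^ (2 / (2 - α))) * Y := by
      gcongr
    linarith

/-! ### Time dependence and the energy inequality -/

/-- Spatial derivatives of a jointly smooth function are jointly smooth in time and space. -/
theorem contDiff_slice_pd1 {F : ℝ × (ℝ × ℝ) → ℝ} (hF : ContDiff ℝ ((⊤ : ℕ∞) : WithTop ℕ∞) F) :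
    ContDiff ℝ ((⊤ : ℕ∞) : WithTop ℕ∞)
      fun p : ℝ × (ℝ × ℝ) => pd1 (fun y => F (p.1, y)) p.2 := by
  have e : (fun p : ℝ × (ℝ × ℝ) => pd1 (fun y => F (p.1, y)) p.2)
      = fun p => fderiv ℝ F p (0, (1, 0)) := by
    funext p
    have h1 : HasDerivAt (fun s : ℝ => (p.1, (s, p.2.2))) ((0 : ℝ), ((1 : ℝ), (0 : ℝ))) p.2.1 :=
      (hasDerivAt_const _ _).prodMk ((hasDerivAt_id _).prodMk (hasDerivAt_const _ _))
    exact (((hF.differentiable (by simp)) (p.1, (p.2.1, p.2.2))).hasFDerivAt.comp_hasDerivAt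
      p.2.1 h1).deriv
  rw [e]
  exact (hF.fderiv_right (by simp)).clm_apply contDiff_const

theorem contDiff_slice_pd2 {F : ℝ × (ℝ × ℝ) → ℝ} (hF : ContDiff ℝ ((⊤ : ℕ∞) : WithTop ℕ∞) F) :
    ContDiff ℝ ((⊤ : ℕ∞) : WithTop ℕ∞)
      fun p : ℝ × (ℝ × ℝ) => pd2 (fun y => F (p.1, y)) p.2 := by
  have e : (fun p : ℝ × (ℝ × ℝ) => pd2 (fun y => F (p.1, y)) p.2)
      = fun p => fderiv ℝ F p (0, (0, 1)) := by
    funext p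
    have h1 : HasDerivAt (fun s : ℝ => (p.1, (p.2.1, s))) ((0 : ℝ), ((0 : ℝ), (1 : ℝ))) p.2.2 :=
      (hasDerivAt_const _ _).prodMk ((hasDerivAt_const _ _).prodMk (hasDerivAt_id _))
    exact (((hF.differentiable (by simp)) (p.1, (p.2.1, p.2.2))).hasFDerivAt.comp_hasDerivAt
      p.2.2 h1).deriv
  rw [e]
  exact (hF.fderiv_right (by simp)).clm_apply contDiff_const

theorem continuous_slice_lap {F : ℝ × (ℝ × ℝ) → ℝ}
    (hF : ContDiff ℝ ((⊤ : ℕ∞) : WithTop ℕ∞) F) :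
    Continuous fun p : ℝ × (ℝ × ℝ) => lap (fun y => F (p.1, y)) p.2 :=
  (contDiff_slice_pd1 (contDiff_slice_pd1 hF)).continuous.add
    (contDiff_slice_pd2 (contDiff_slice_pd2 hF)).continuous

/-- Differentiation under the integral sign over `Ω`. -/
theorem hasDerivAt_integral_Omega2 {F : ℝ × (ℝ × ℝ) → ℝ}
    (hF : ContDiff ℝ ((⊤ : ℕ∞) : WithTop ℕ∞) F) (t : ℝ) :
    HasDerivAt (fun s => ∫ x in Omega2, F (s, x))
      (∫ x in Omega2, deriv (fun s => F (s, x)) t) t := by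
  have hd : ∀ s x, HasDerivAt (fun s => F (s, x)) (fderiv ℝ F (s, x) (1, 0)) s := by
    intro s x
    have h1 : HasDerivAt (fun s : ℝ => (s, x)) ((1 : ℝ), (0 : ℝ × ℝ)) s :=
      (hasDerivAt_id _).prodMk (hasDerivAt_const _ _)
    exact ((hF.differentiable (by simp)) (s, x)).hasFDerivAt.comp_hasDerivAt s h1
  have hc : Continuous fun p : ℝ × (ℝ × ℝ) => fderiv ℝ F p (1, 0) :=
    ((hF.fderiv_right (m := ((⊤ : ℕ∞) : WithTop ℕ∞)) (by simp)).clm_apply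
      contDiff_const).continuous
  have hFc := hF.continuous
  obtain ⟨M, hM⟩ := ((isCompact_Icc (a := t - 1) (b := t + 1)).prod
    isCompact_Omega2).exists_bound_of_continuousOn hc.continuousOn
  have h := (hasDerivAt_integral_of_dominated_loc_of_deriv_le (μ := volume.restrict Omega2)
    (F := fun s x => F (s, x)) (F' := fun s x => fderiv ℝ F (s, x) (1, 0)) (x₀ := t)
    (s := Icc (t - 1) (t + 1)) (bound := fun _ => M)
    (Icc_mem_nhds (by linarith) (by linarith))
    (Filter.Eventually.of_forall fun s => Continuous.aestronglyMeasurable (by fun_prop))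
    (integrableOn_Omega2 (by fun_prop))
    (Continuous.aestronglyMeasurable (hc.comp (by fun_prop)))
    ((ae_restrict_iff' measurableSet_Omega2).2
      (Filter.Eventually.of_forall fun x hx s hs => hM (s, x) ⟨hs, hx⟩))
    (integrableOn_Omega2 continuous_const)
    (Filter.Eventually.of_forall fun x s _ => hd s x)).2
  simpa only [fun x => (hd t x).deriv] using h

theorem summable_inv_one_add_sq : Summable fun a : ℤ => (1 + (a : ℝ) ^ 2)⁻¹ := by
  have h1 : Summable fun a : ℤ => 1 / (a : ℝ) ^ 2 + if a = 0 then (1 : ℝ) else 0 :=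
    (Real.summable_one_div_int_pow.2 one_lt_two).add (hasSum_ite_eq (0 : ℤ) (1 : ℝ)).summable
  refine Summable.of_nonneg_of_le (fun a => by positivity) (fun a => ?_) h1
  by_cases ha : a = 0
  · simp [ha]
  · have : (0 : ℝ) < (a : ℝ) ^ 2 := by positivity
    rw [if_neg ha, add_zero, one_div]
    exact inv_anti₀ this (by linarith)

theorem summable_lattice :
    Summable fun ℓ : ℤ × ℤ => (1 + (ℓ.1 : ℝ) ^ 2)⁻¹ * (1 + (ℓ.2 : ℝ) ^ 2)⁻¹ :=
  summable_inv_one_add_sq.mul_of_nonneg summable_inv_one_add_sq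
    (fun a => by positivity) (fun a => by positivity)

theorem SmoothTS.fst {u : ℝ → ℝ × ℝ → ℝ × ℝ} (hu : SmoothTS u) :
    ContDiff ℝ ((⊤ : ℕ∞) : WithTop ℕ∞) fun p : ℝ × (ℝ × ℝ) => (u p.1 p.2).1 :=
  contDiff_fst.comp (contDiff_infty.2 hu)

theorem SmoothTS.snd {u : ℝ → ℝ × ℝ → ℝ × ℝ} (hu : SmoothTS u) :
    ContDiff ℝ ((⊤ : ℕ∞) : WithTop ℕ∞) fun p : ℝ × (ℝ × ℝ) => (u p.1 p.2).2 :=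
  contDiff_snd.comp (contDiff_infty.2 hu)

theorem SmoothTS.sp1 {u : ℝ → ℝ × ℝ → ℝ × ℝ} (hu : SmoothTS u) (hp : ∀ t, Periodic2 (u t))
    (t : ℝ) : SP fun y => (u t y).1 :=
  ⟨hu.fst.comp (contDiff_const.prodMk contDiff_id), fun x => by rw [(hp t x).1],
    fun x => by rw [(hp t x).2]⟩

theorem SmoothTS.sp2 {u : ℝ → ℝ × ℝ → ℝ × ℝ} (hu : SmoothTS u) (hp : ∀ t, Periodic2 (u t))
    (t : ℝ) : SP fun y => (u t y).2 :=
  ⟨hu.snd.comp (contDiff_const.prodMk contDiff_id), fun x => by rw [(hp t x).1],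
    fun x => by rw [(hp t x).2]⟩

theorem continuous_l2sqLap {u : ℝ → ℝ × ℝ → ℝ × ℝ} (hu : SmoothTS u) :
    Continuous fun s => l2sqLap (u s) := by
  have c1 := continuous_slice_lap hu.fst
  have c2 := continuous_slice_lap hu.snd
  have c : Continuous (Function.uncurry fun (s : ℝ) (x : ℝ × ℝ) =>
      (lap (fun y => (u s y).1) x) ^ 2 + (lap (fun y => (u s y).2) x) ^ 2) :=
    (c1.pow 2).add (c2.pow 2)
  exact continuous_parametric_integral_of_continuous (μ := volume) c isCompact_Omega2

theorem continuous_fc {F : ℝ × (ℝ × ℝ) → ℝ} (hF : Continuous F) (ℓ : ℤ × ℤ) :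
    Continuous fun s => fc (fun y => F (s, y)) ℓ := by
  have c : Continuous (Function.uncurry fun (s : ℝ) (x : ℝ × ℝ) => ((F (s, x) : ℝ) : ℂ) *
      Complex.exp (-(Complex.I) * ((ℓ.1 : ℂ) * (x.1 : ℂ) + (ℓ.2 : ℂ) * (x.2 : ℂ)))) := by
    simp only [Function.uncurry_def]
    fun_prop
  exact (continuous_parametric_integral_of_continuous (μ := volume) c
    isCompact_Omega2).const_smul (((2 * π) ^ 2)⁻¹)

/-- The Fourier coefficients are `O(|ℓ|⁻²)` locally uniformly in time, so the series for the
negative Sobolev norm converges locally uniformly. -/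
theorem continuous_hnormSq {u : ℝ → ℝ × ℝ → ℝ × ℝ} (hu : SmoothTS u) (hp : ∀ t, Periodic2 (u t))
    {α : ℝ} (hα : 0 ≤ α) : Continuous fun s => hnormSq (u s) (-α) := by
  refine continuous_iff_continuousAt.2 fun t => ?_
  obtain ⟨M, hM⟩ := (isCompact_Icc (a := t - 1) (b := t + 1)).exists_bound_of_continuousOn
    (continuous_l2sqLap hu).continuousOn
  refine ContinuousOn.continuousAt (s := Icc (t - 1) (t + 1)) ?_
    (Icc_mem_nhds (by linarith) (by linarith))
  have hcoef : ∀ ℓ, Continuous fun s => coefAbsSq (u s) ℓ := fun ℓ =>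
    ((continuous_fc hu.fst.continuous ℓ).norm.pow 2).add
      ((continuous_fc hu.snd.continuous ℓ).norm.pow 2)
  refine ContinuousOn.mul continuousOn_const (continuousOn_tsum (fun ℓ => ?_)
    (summable_lattice.mul_left (4 * (((2 * π) ^ 2)⁻¹ * M))) fun ℓ s hs => (hterm_le hα ℓ).trans ?_)
  · by_cases hℓ : ℓ = 0
    · simp only [if_pos hℓ]; exact continuousOn_const
    · simp only [if_neg hℓ]; exact ((hcoef ℓ).const_mul _).continuousOn
  · have hMs := (le_abs_self _).trans (hM s hs)
    have hM0 : 0 ≤ M := (norm_nonneg _).trans (hM s hs)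
    split_ifs with hℓ
    · positivity
    · have hw := one_le_freq hℓ
      have h1 := le_hasSum (hasSum_coefAbsSq_lap (hu.sp1 hp s) (hu.sp2 hp s)) ℓ fun m _ =>
        mul_nonneg (sq_nonneg _) (coefAbsSq_nonneg _ m)
      have h2 : ((2 * π) ^ 2)⁻¹ * l2sqLap (u s) ≤ ((2 * π) ^ 2)⁻¹ * M :=
        mul_le_mul_of_nonneg_left hMs (by positivity)
      have hc := coefAbsSq_nonneg (u s) ℓ
      have h3 : (1 + (ℓ.1 : ℝ) ^ 2) * (1 + (ℓ.2 : ℝ) ^ 2)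
          ≤ 4 * ((ℓ.1 : ℝ) ^ 2 + (ℓ.2 : ℝ) ^ 2) ^ 2 := by
        nlinarith [sq_nonneg (ℓ.1 : ℝ), sq_nonneg (ℓ.2 : ℝ),
          mul_nonneg (sq_nonneg (ℓ.1 : ℝ)) (sq_nonneg (ℓ.2 : ℝ))]
      rw [← mul_inv, ← div_eq_mul_inv, le_div_iff₀ (by positivity)]
      have h4 := mul_le_mul_of_nonneg_left h3 hc
      linarith

/-- The differential energy inequality: `L²` product of the equation with `u`, the linear
destabilizing term being split by Young's inequality. -/
theorem energy_deriv {u : ℝ → ℝ × ℝ → ℝ × ℝ} (hu : SmoothTS u) (hp : ∀ t, Periodic2 (u t))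
    {lam T : ℝ} (hk : IsKSE lam T u) {t : ℝ} (ht : t ∈ Icc (0 : ℝ) T) :
    ∃ y', HasDerivAt (fun s => l2sq (u s)) y' t ∧
      y' ≤ lam ^ 2 * l2sq (u t) - l2sqLap (u t) +
        2 * |∫ x in Omega2, ((u t x).1 * adv (u t) (fun y => (u t y).1) x
          + (u t x).2 * adv (u t) (fun y => (u t y).2) x)| := by
  have h1 := hu.sp1 hp t
  have h2 := hu.sp2 hp t
  have hd := hasDerivAt_integral_Omega2 ((hu.fst.pow 2).add (hu.snd.pow 2)) t
  refine ⟨_, hd, ?_⟩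
  have hdt1 : ∀ x, HasDerivAt (fun s => (u s x).1) (deriv (fun s => (u s x).1) t) t := fun x =>
    (((hu.fst.comp (contDiff_id.prodMk contDiff_const)).differentiable (by simp)) t :
      DifferentiableAt ℝ (fun s => (u s x).1) t).hasDerivAt
  have hdt2 : ∀ x, HasDerivAt (fun s => (u s x).2) (deriv (fun s => (u s x).2) t) t := fun x =>
    (((hu.snd.comp (contDiff_id.prodMk contDiff_const)).differentiable (by simp)) t :
      DifferentiableAt ℝ (fun s => (u s x).2) t).hasDerivAt
  have hpt : ∀ x, deriv (fun s => (u s x).1 ^ 2 + (u s x).2 ^ 2) t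
      = 2 * ((u t x).1 * deriv (fun s => (u s x).1) t
        + (u t x).2 * deriv (fun s => (u s x).2) t) := fun x => by
    refine Eq.trans (((hdt1 x).pow 2).add ((hdt2 x).pow 2)).deriv ?_
    simp only [Nat.cast_ofNat, Nat.add_one_sub_one, pow_one]
    ring
  have hk1 := fun x => (hk t ht x).1
  have hk2 := fun x => (hk t ht x).2
  set f : ℝ × ℝ → ℝ := fun y => (u t y).1 with hf
  set g : ℝ × ℝ → ℝ := fun y => (u t y).2 with hg
  have hfc := h1.continuous
  have hgc := h2.continuous
  have hfl := h1.lap.continuous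
  have hgl := h2.lap.continuous
  have hfll := h1.lap.lap.continuous
  have hgll := h2.lap.lap.continuous
  have hf1 := h1.pd1.continuous
  have hf2 := h1.pd2.continuous
  have hg1 := h2.pd1.continuous
  have hg2 := h2.pd2.continuous
  have hNc : Continuous fun x => f x * adv (u t) f x + g x * adv (u t) g x := by
    change Continuous fun x => f x * (f x * pd1 f x + g x * pd2 f x)
        + g x * (f x * pd1 g x + g x * pd2 g x)
    fun_prop
  have eY : l2sq (u t) = ∫ x in Omega2, (f x ^ 2 + g x ^ 2) := rfl
  have eD : l2sqLap (u t) = ∫ x in Omega2, (lap f x ^ 2 + lap g x ^ 2) := rfl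
  have ebi : ∫ x in Omega2, (f x * lap (lap f) x + g x * lap (lap g) x) = l2sqLap (u t) := by
    rw [integral_add (integrableOn_Omega2 (by fun_prop)) (integrableOn_Omega2 (by fun_prop)),
      integral_mul_lap_comm h1 h1.lap, integral_mul_lap_comm h2 h2.lap, eD,
      integral_add (integrableOn_Omega2 (by fun_prop)) (integrableOn_Omega2 (by fun_prop))]
    simp only [sq]
  set N := ∫ x in Omega2, (f x * adv (u t) f x + g x * adv (u t) g x)
  have hle : ∫ x in Omega2, deriv (fun s => (u s x).1 ^ 2 + (u s x).2 ^ 2) t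
      ≤ ∫ x in Omega2, (-2 * (f x * adv (u t) f x + g x * adv (u t) g x)
        + (-2) * (f x * lap (lap f) x + g x * lap (lap g) x)
        + (lam ^ 2 * (f x ^ 2 + g x ^ 2) + (lap f x ^ 2 + lap g x ^ 2))) := by
    have e : (fun x => deriv (fun s => (u s x).1 ^ 2 + (u s x).2 ^ 2) t)
        = fun x => -2 * (f x * adv (u t) f x + g x * adv (u t) g x)
          + (-2) * (f x * lap (lap f) x + g x * lap (lap g) x)
          - 2 * lam * (f x * lap f x + g x * lap g x) := by
      funext x
      rw [hpt x, eq_sub_of_add_eq (hk1 x), eq_sub_of_add_eq (hk2 x)]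
      simp only [hf, hg]
      ring
    rw [e]
    refine integral_mono (integrableOn_Omega2 (by fun_prop)) (integrableOn_Omega2 (by fun_prop))
      fun x => ?_
    simp only
    nlinarith [sq_nonneg (lam * f x + lap f x), sq_nonneg (lam * g x + lap g x)]
  rw [integral_add (integrableOn_Omega2 (by fun_prop)) (integrableOn_Omega2 (by fun_prop)),
    integral_add (integrableOn_Omega2 (by fun_prop)) (integrableOn_Omega2 (by fun_prop)),
    integral_add (integrableOn_Omega2 (by fun_prop)) (integrableOn_Omega2 (by fun_prop)),
    MeasureTheory.integral_const_mul, MeasureTheory.integral_const_mul,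
    MeasureTheory.integral_const_mul, ebi, ← eY, ← eD] at hle
  refine hle.trans ?_
  have := neg_abs_le N
  linarith

/-- Grönwall's inequality with a continuous coefficient `a` of arbitrary sign. -/
theorem gronwall_le {y a : ℝ → ℝ} {T : ℝ} (ha : Continuous a)
    (hy : ∀ t ∈ Icc (0 : ℝ) T, ∃ y', HasDerivAt y y' t ∧ y' ≤ a t * y t)
    {t : ℝ} (ht : t ∈ Icc (0 : ℝ) T) :
    y t ≤ Real.exp (∫ s in (0 : ℝ)..t, a s) * y 0 := by
  choose! y' hy' hle using hy
  have hI : ∀ t, HasDerivAt (fun t => ∫ s in (0 : ℝ)..t, a s) (a t) t := fun t =>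
    ha.integral_hasStrictDerivAt 0 t |>.hasDerivAt
  have hG : ∀ t ∈ Icc (0 : ℝ) T, HasDerivAt
      (fun t => Real.exp (-∫ s in (0 : ℝ)..t, a s) * y t)
      (Real.exp (-∫ s in (0 : ℝ)..t, a s) * (-a t) * y t
        + Real.exp (-∫ s in (0 : ℝ)..t, a s) * y' t) t := fun t ht =>
    ((hI t).neg.exp).mul (hy' t ht)
  have hanti : AntitoneOn (fun t => Real.exp (-∫ s in (0 : ℝ)..t, a s) * y t) (Icc 0 T) := by
    refine antitoneOn_of_deriv_nonpos (convex_Icc 0 T)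
      (fun t ht => (hG t ht).continuousAt.continuousWithinAt)
      (fun t ht => (hG t (interior_subset ht)).differentiableAt.differentiableWithinAt)
      fun t ht => ?_
    have ht' := interior_subset ht
    rw [(hG t ht').deriv]
    have h1 := hle t ht'
    have h2 := (Real.exp_pos (-∫ s in (0 : ℝ)..t, a s)).le
    nlinarith [mul_le_mul_of_nonneg_left h1 h2]
  have := hanti ⟨le_rfl, ht.1.trans ht.2⟩ ht ht.1
  simp only [intervalIntegral.integral_same, neg_zero, Real.exp_zero, one_mul] at this
  rw [Real.exp_neg, inv_mul_le_iff₀ (Real.exp_pos _)] at this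
  exact this

/-! ### The Grönwall estimate -/

/-- LPS-type Grönwall estimate for the 2D KSE with negative Sobolev norms:
for each `α ∈ [0,2)` there is `C₀ > 0` so that for any `λ > 0` and any smooth 2π-periodic
mean-free solution,
`‖u(t)‖²_{L²} ≤ exp(λ²t + C₀ ∫₀ᵗ ‖u(s)‖_{Ḣ^{−α}}^{4/(2−α)} ds)‖u(0)‖²_{L²}`. -/
theorem stmt14 :
    ∀ α : ℝ, α ∈ Set.Ico (0:ℝ) 2 →
      ∃ C0 : ℝ, 0 < C0 ∧
        ∀ lam T : ℝ, 0 < lam → 0 ≤ T →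
          ∀ u : ℝ → ℝ × ℝ → ℝ × ℝ, SmoothTS u → (∀ t, Periodic2 (u t)) →
            IsKSE lam T u →
            (∀ t ∈ Set.Icc (0:ℝ) T, (∫ x in Omega2, u t x) = 0) →
            ∀ t ∈ Set.Icc (0:ℝ) T,
              l2sq (u t)
                ≤ Real.exp (lam^2 * t +
                    C0 * ∫ s in (0:ℝ)..t, hnorm (u s) (-α) ^ (4 / (2 - α)))
                  * l2sq (u 0) := by
  intro α hα
  refine ⟨gronwallConst α, gronwallConst_pos α, fun lam T _ _ u hu hp hk hmean t ht => ?_⟩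
  have hα2 : 0 < 2 - α := by linarith [hα.2]
  have hc : Continuous fun s => hnorm (u s) (-α) ^ (4 / (2 - α)) :=
    (continuous_hnormSq hu hp hα.1).sqrt.rpow_const fun _ => Or.inr (by positivity)
  have hcC := hc.const_mul (gronwallConst α)
  have key := gronwall_le (y := fun s => l2sq (u s))
    (a := fun s => lam ^ 2 + gronwallConst α * hnorm (u s) (-α) ^ (4 / (2 - α))) (T := T)
    (continuous_const.add hcC) (fun s hs => by
      obtain ⟨y', hy', hle⟩ := energy_deriv hu hp hk hs
      have hus : Continuous (u s) :=
        ((contDiff_infty.2 hu).continuous).comp (Continuous.prodMk_right s)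
      have habs := nonlinear_absorb (hu.sp1 hp s) (hu.sp2 hp s)
        (coefAbsSq_zero hus (hmean s hs)) hα.1 hα.2
      exact ⟨y', hy', by linarith⟩) ht
  rw [intervalIntegral.integral_add intervalIntegrable_const (hcC.intervalIntegrable _ _),
    intervalIntegral.integral_const, intervalIntegral.integral_const_mul, smul_eq_mul, sub_zero,
    mul_comm t] at key
  exact key
end
end

section
/- Let λ > 0 and let u : [0,T] × ℝ² → ℝ² be a C² solution of the 2D Burgers–Sivashinsky equation ∂ₜu + (u·∇)u = Δu + λu such that u(t,·) is curl-free (∂₁u² = ∂₂u¹) for every t ∈ [0,T]. Let δ = ∇·u. Then for every (t,x) ∈ [0,T] × ℝ², ∂ₜδ(t,x) + u(t,x)·∇δ(t,x) = −|∇u(t,x)|² + Δδ(t,x) + λδ(t,x), where |∇u|² = Σ_{i,j=1,2}(∂ᵢuʲ)². -/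
/-!
The claim is the divergence of the equation; the only delicate point is that `u` is merely `C²`
while `Δδ` contains third derivatives of `u`. For a curl-free field `∇δ = Δu` holds using second
derivatives only (`∂₂∂₂u¹ = ∂₂∂₁u² = ∂₁∂₂u²`, and likewise for `u²`). The equation then gives
`∇δ = ∂ₜu + (u·∇)u − λu`, whose right-hand side is `C¹`; so `Δδ` is the divergence of that
right-hand side, and expanding it by the product rule, with `∂ₜ∂ᵢ = ∂ᵢ∂ₜ` and `∂₁u² = ∂₂u¹`, gives
the identity.

Partial derivatives are handled as directional derivatives `dirD v f` of functions of
`p = (t, x) ∈ ℝ × ℝ²` along the coordinate vectors; `pd1_slice`, `pd2_slice` and `deriv_time`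
translate between the two, and `dirD_comm` is the symmetry of second derivatives.
-/

open Real MeasureTheory Set intervalIntegral
open scoped Real Classical

noncomputable section

/-- The 2D Burgers–Sivashinsky equation `∂ₜu + (u·∇)u = Δu + λu` on `[0,T] × ℝ²`. -/
def IsBSE (lam T : ℝ) (u : ℝ → ℝ × ℝ → ℝ × ℝ) : Prop :=
  ∀ t ∈ Set.Icc (0:ℝ) T, ∀ x : ℝ × ℝ,
    deriv (fun s => (u s x).1) t + adv (u t) (fun y => (u t y).1) x
      = lap (fun y => (u t y).1) x + lam * (u t x).1 ∧
    deriv (fun s => (u s x).2) t + adv (u t) (fun y => (u t y).2) x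
      = lap (fun y => (u t y).2) x + lam * (u t x).2

/-- Directional derivative of a space-time function in the constant direction `v`. -/
def dirD (v : ℝ × (ℝ × ℝ)) (f : ℝ × (ℝ × ℝ) → ℝ) (p : ℝ × (ℝ × ℝ)) : ℝ := fderiv ℝ f p v

/-- Unit vector of the time direction. -/
def e0 : ℝ × (ℝ × ℝ) := (1, (0, 0))

/-- Unit vector of the first spatial direction. -/
def e1 : ℝ × (ℝ × ℝ) := (0, (1, 0))

/-- Unit vector of the second spatial direction. -/
def e2 : ℝ × (ℝ × ℝ) := (0, (0, 1))

lemma deriv_time {f : ℝ × (ℝ × ℝ) → ℝ} (hf : Differentiable ℝ f) (t : ℝ) (x : ℝ × ℝ) :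
    deriv (fun s => f (s, x)) t = dirD e0 f (t, x) := by
  have h : HasDerivAt (fun s : ℝ => (s, x)) e0 t :=
    (hasDerivAt_id t).prodMk (hasDerivAt_const t x)
  exact ((hf (t, x)).hasFDerivAt.comp_hasDerivAt t h).deriv

lemma pd1_slice {f : ℝ × (ℝ × ℝ) → ℝ} (hf : Differentiable ℝ f) (t : ℝ) (x : ℝ × ℝ) :
    pd1 (fun y => f (t, y)) x = dirD e1 f (t, x) := by
  have h : HasDerivAt (fun s : ℝ => (t, (s, x.2))) e1 x.1 :=
    (hasDerivAt_const x.1 t).prodMk ((hasDerivAt_id x.1).prodMk (hasDerivAt_const x.1 x.2))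
  exact ((hf (t, x)).hasFDerivAt.comp_hasDerivAt x.1 h).deriv

lemma pd2_slice {f : ℝ × (ℝ × ℝ) → ℝ} (hf : Differentiable ℝ f) (t : ℝ) (x : ℝ × ℝ) :
    pd2 (fun y => f (t, y)) x = dirD e2 f (t, x) := by
  have h : HasDerivAt (fun s : ℝ => (t, (x.1, s))) e2 x.2 :=
    (hasDerivAt_const x.2 t).prodMk ((hasDerivAt_const x.2 x.1).prodMk (hasDerivAt_id x.2))
  exact ((hf (t, x)).hasFDerivAt.comp_hasDerivAt x.2 h).deriv

lemma dirD_differentiable {f : ℝ × (ℝ × ℝ) → ℝ} (hf : ContDiff ℝ 2 f) (v : ℝ × (ℝ × ℝ)) :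
    Differentiable ℝ (dirD v f) := by
  have h : Differentiable ℝ (fderiv ℝ f) :=
    (hf.fderiv_right (m := 1) (by norm_num)).differentiable (by norm_num)
  exact fun p => (h p).clm_apply (differentiableAt_const v)

lemma dirD_comm {f : ℝ × (ℝ × ℝ) → ℝ} (hf : ContDiff ℝ 2 f) (v w p : ℝ × (ℝ × ℝ)) :
    dirD v (dirD w f) p = dirD w (dirD v f) p := by
  have h : Differentiable ℝ (fderiv ℝ f) :=
    (hf.fderiv_right (m := 1) (by norm_num)).differentiable (by norm_num)
  have key : ∀ a b : ℝ × (ℝ × ℝ), dirD a (dirD b f) p = fderiv ℝ (fderiv ℝ f) p a b := by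
    intro a b
    have := ((h p).hasFDerivAt.clm_apply (hasFDerivAt_const b p)).fderiv
    unfold dirD
    rw [this]
    simp
  rw [key, key]
  exact (hf.contDiffAt.isSymmSndFDerivAt (by simp)) v w

lemma dirD_add {f g : ℝ × (ℝ × ℝ) → ℝ} (hf : Differentiable ℝ f) (hg : Differentiable ℝ g)
    (v p : ℝ × (ℝ × ℝ)) :
    dirD v (fun q => f q + g q) p = dirD v f p + dirD v g p := by
  unfold dirD
  rw [((hf p).hasFDerivAt.fun_add (hg p).hasFDerivAt).fderiv]
  rfl

/-- Derivative of the right-hand side of `∇δ = ∂ₜu + (u·∇)u − λu`, written componentwise. -/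
lemma dirD_rhs {a b c d e f : ℝ × (ℝ × ℝ) → ℝ} (ha : Differentiable ℝ a)
    (hb : Differentiable ℝ b) (hc : Differentiable ℝ c) (hd : Differentiable ℝ d)
    (he : Differentiable ℝ e) (hf : Differentiable ℝ f) (lam : ℝ) (v p : ℝ × (ℝ × ℝ)) :
    dirD v (fun q => a q + (b q * c q + d q * e q) - lam * f q) p
      = dirD v a p + (b p * dirD v c p + c p * dirD v b p
          + (d p * dirD v e p + e p * dirD v d p)) - lam * dirD v f p := by
  unfold dirD
  rw [(((ha p).hasFDerivAt.fun_add (((hb p).hasFDerivAt.fun_mul (hc p).hasFDerivAt).fun_add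
    ((hd p).hasFDerivAt.fun_mul (he p).hasFDerivAt))).fun_sub
    ((hf p).hasFDerivAt.const_mul lam)).fderiv]
  simp

/-- For a C² curl-free solution of the 2D Burgers–Sivashinsky equation,
the divergence satisfies `∂ₜδ + u·∇δ = −|∇u|² + Δδ + λδ` on `[0,T] × ℝ²`. -/
theorem stmt16 (lam T : ℝ) (hlam : 0 < lam) (hT : 0 ≤ T)
    (u : ℝ → ℝ × ℝ → ℝ × ℝ)
    (hreg : ContDiff ℝ 2 (fun p : ℝ × (ℝ × ℝ) => u p.1 p.2))
    (hBSE : IsBSE lam T u)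
    (hcf : ∀ t ∈ Set.Icc (0:ℝ) T, ∀ x : ℝ × ℝ,
      pd1 (fun y => (u t y).2) x = pd2 (fun y => (u t y).1) x) :
    ∀ t ∈ Set.Icc (0:ℝ) T, ∀ x : ℝ × ℝ,
      deriv (fun s => divg (u s) x) t + adv (u t) (divg (u t)) x
        = -(gradNormSq (u t) x) + lap (divg (u t)) x + lam * divg (u t) x := by
  intro t ht x
  set F : ℝ × (ℝ × ℝ) → ℝ := fun p => (u p.1 p.2).1 with hF
  set G : ℝ × (ℝ × ℝ) → ℝ := fun p => (u p.1 p.2).2 with hG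
  have cF : ContDiff ℝ 2 F := hreg.fst
  have cG : ContDiff ℝ 2 G := hreg.snd
  have dF : Differentiable ℝ F := cF.differentiable (by norm_num)
  have dG : Differentiable ℝ G := cG.differentiable (by norm_num)
  have dDF := dirD_differentiable cF
  have dDG := dirD_differentiable cG
  have F1 : ∀ s, pd1 (fun y => (u s y).1) = fun y => dirD e1 F (s, y) :=
    fun s => funext fun y => pd1_slice dF s y
  have F2 : ∀ s, pd2 (fun y => (u s y).1) = fun y => dirD e2 F (s, y) :=
    fun s => funext fun y => pd2_slice dF s y
  have G1 : ∀ s, pd1 (fun y => (u s y).2) = fun y => dirD e1 G (s, y) :=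
    fun s => funext fun y => pd1_slice dG s y
  have G2 : ∀ s, pd2 (fun y => (u s y).2) = fun y => dirD e2 G (s, y) :=
    fun s => funext fun y => pd2_slice dG s y
  have Ft : ∀ y, deriv (fun s => (u s y).1) t = dirD e0 F (t, y) := fun y => deriv_time dF t y
  have Gt : ∀ y, deriv (fun s => (u s y).2) t = dirD e0 G (t, y) := fun y => deriv_time dG t y
  have hcurl : (fun y => dirD e1 G (t, y)) = fun y => dirD e2 F (t, y) := by
    funext y
    have := hcf t ht y
    rwa [G1, F2] at this
  have hδ : ∀ s, divg (u s) = fun y => (fun p => dirD e1 F p + dirD e2 G p) (s, y) := by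
    intro s
    funext y
    simp only [divg, F1, G2]
  have dδ : Differentiable ℝ (fun p => dirD e1 F p + dirD e2 G p) := (dDF e1).fun_add (dDG e2)
  -- the curl-free condition, differentiated once in space
  have c1 : ∀ y, dirD e1 (dirD e1 G) (t, y) = dirD e1 (dirD e2 F) (t, y) := by
    intro y
    rw [← pd1_slice (dDG e1), ← pd1_slice (dDF e2), hcurl]
  have c2 : ∀ y, dirD e2 (dirD e1 G) (t, y) = dirD e2 (dirD e2 F) (t, y) := by
    intro y
    rw [← pd2_slice (dDG e1), ← pd2_slice (dDF e2), hcurl]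
  -- `∇δ` in terms of second derivatives of `u`
  have δ1 : ∀ y, pd1 (divg (u t)) y
      = dirD e1 (dirD e1 F) (t, y) + dirD e1 (dirD e2 G) (t, y) := by
    intro y
    rw [hδ t, pd1_slice dδ, dirD_add (dDF e1) (dDG e2)]
  have δ2 : ∀ y, pd2 (divg (u t)) y
      = dirD e2 (dirD e1 F) (t, y) + dirD e2 (dirD e2 G) (t, y) := by
    intro y
    rw [hδ t, pd2_slice dδ, dirD_add (dDF e1) (dDG e2)]
  -- `∇δ = Δu`, with `Δu` replaced by the `C¹` expression coming from the equation
  have E1 : pd1 (divg (u t)) = fun y => (fun q => dirD e0 F q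
      + (F q * dirD e1 F q + G q * dirD e2 F q) - lam * F q) (t, y) := by
    funext y
    have h := (hBSE t ht y).1
    simp only [adv, lap, F1, F2, Ft] at h
    rw [pd1_slice (dDF e1), pd2_slice (dDF e2)] at h
    rw [δ1, dirD_comm cG e1 e2, c2]
    simp only [hF, hG] at h ⊢
    linarith
  have E2 : pd2 (divg (u t)) = fun y => (fun q => dirD e0 G q
      + (F q * dirD e1 G q + G q * dirD e2 G q) - lam * G q) (t, y) := by
    funext y
    have h := (hBSE t ht y).2
    simp only [adv, lap, G1, G2, Gt] at h
    rw [pd1_slice (dDG e1), pd2_slice (dDG e2)] at h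
    rw [δ2, dirD_comm cF e2 e1, ← c1]
    simp only [hF, hG] at h ⊢
    linarith
  have L1 := pd1_slice (f := fun q => dirD e0 F q
    + (F q * dirD e1 F q + G q * dirD e2 F q) - lam * F q) (by fun_prop) t x
  rw [← E1, dirD_rhs (dDF e0) dF (dDF e1) dG (dDF e2) dF] at L1
  have L2 := pd2_slice (f := fun q => dirD e0 G q
    + (F q * dirD e1 G q + G q * dirD e2 G q) - lam * G q) (by fun_prop) t x
  rw [← E2, dirD_rhs (dDG e0) dF (dDG e1) dG (dDG e2) dG] at L2
  have δt : deriv (fun s => divg (u s) x) t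
      = dirD e1 (dirD e0 F) (t, x) + dirD e2 (dirD e0 G) (t, x) := by
    simp only [hδ]
    rw [deriv_time dδ, dirD_add (dDF e1) (dDG e2), dirD_comm cF e0 e1, dirD_comm cG e0 e2]
  have hx : dirD e1 G (t, x) = dirD e2 F (t, x) := congrFun hcurl x
  have hdiv : divg (u t) x = dirD e1 F (t, x) + dirD e2 G (t, x) := by rw [hδ]
  rw [δt, adv, δ1, δ2, lap, L1, L2, gradNormSq, F1, F2, G1, G2, hdiv, dirD_comm cG e1 e2,
    dirD_comm cF e2 e1]
  simp only [hx]
  ring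
end
end
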